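/- arXiv:0712.0123 — 6 statements merged into one kernel-verified Lean document; each statement's English description precedes it below -/
import Mathlib

section
/- Let R be a commutative coherent ring and let n, m be nonnegative integers. Assume that Ext_R^{n+1}(P, R) = 0 for every finitely presented R-module P (i.e., R is n-FC), and that every flat R-module has projective dimension at most m (i.e., R is m-perfect, equivalently cot.D(R) ≤ m). Then for every R-module M, every R-module Q of finite projective dimension, and every integer j > n + m, one has Ext_R^j(M, Q) = 0. (This is the Ext-vanishing form of the inequality G-gldim(R) ≤ G-wdim(R) + cot.D(R) for coherent rings.) -/
open CategoryTheory

noncomputable section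

universe u

/-- The `j`-th Ext group of the `R`-modules `M` and `N`. -/
def extGroup (R : Type u) [CommRing R] (M N : ModuleCat.{u} R) (j : ℕ) : ModuleCat R :=
  ((Ext R (ModuleCat.{u} R) j).obj (Opposite.op M)).obj N

/-- `Ext_R^j(M, N) = 0`. -/
def ExtVanish (R : Type u) [CommRing R] (M N : ModuleCat.{u} R) (j : ℕ) : Prop :=
  Subsingleton (extGroup R M N j)

/-- The projective dimension of `M` is at most `n`
(via the standard Ext-vanishing characterization). -/
def ProjDimLE (R : Type u) [CommRing R] (M : ModuleCat.{u} R) (n : ℕ) : Prop :=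
  ∀ (N : ModuleCat.{u} R) (j : ℕ), n < j → ExtVanish R M N j

/-- `M` has finite projective dimension. -/
def HasFinProjDim (R : Type u) [CommRing R] (M : ModuleCat.{u} R) : Prop :=
  ∃ n, ProjDimLE R M n

/-- `R` is a coherent ring: every finitely generated ideal is finitely presented. -/
def IsCoherentRing (R : Type u) [CommRing R] : Prop :=
  ∀ I : Ideal R, I.FG → Module.FinitePresentation R I

namespace GG

lemma sum_char_apply {A ι : Type*} [AddCommGroup A] (t : Finset ι) (f : ι → CharacterModule A)
    (a : A) : (∑ i ∈ t, f i) a = ∑ i ∈ t, f i a := by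
  classical
  induction t using Finset.induction_on with
  | empty => rfl
  | insert i t hi ih => rw [Finset.sum_insert hi, Finset.sum_insert hi, ← ih]; rfl

lemma baer_factor {R : Type*} [CommRing R] {A B E : Type*} [AddCommGroup A] [AddCommGroup B]
    [AddCommGroup E] [Module R A] [Module R B] [Module R E] (hE : Module.Baer R E)
    (φ : A →ₗ[R] B) (ψ : A →ₗ[R] E) (h : LinearMap.ker φ ≤ LinearMap.ker ψ) :
    ∃ g : B →ₗ[R] E, ∀ a, g (φ a) = ψ a := by
  obtain ⟨g, hg⟩ := hE.extension_property ((LinearMap.ker φ).liftQ φ le_rfl)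
    (by rw [← LinearMap.ker_eq_bot]; exact Submodule.ker_liftQ_eq_bot _ _ _ le_rfl)
    ((LinearMap.ker φ).liftQ ψ h)
  exact ⟨g, fun a => by simpa using LinearMap.congr_fun hg (Submodule.Quotient.mk a)⟩

lemma char_factor {R : Type*} [CommRing R] {A B : Type*} [AddCommGroup A] [AddCommGroup B]
    [Module R A] [Module R B] (φ : A →ₗ[R] B) (c : CharacterModule A)
    (h : ∀ a, φ a = 0 → c a = 0) : ∃ d : CharacterModule B, ∀ a, d (φ a) = c a := by
  obtain ⟨g, hg⟩ := baer_factor (R := ℤ) (E := AddCircle (1 : ℚ)) (Module.Baer.of_divisible _)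
    φ.toAddMonoidHom.toIntLinearMap (AddMonoidHom.toIntLinearMap c) (fun a ha => h a ha)
  exact ⟨g.toAddMonoidHom, hg⟩

lemma flat_dual {R : Type u} [CommRing R] (hcoh : IsCoherentRing R)
    (E : Type u) [AddCommGroup E] [Module R E] (hE : Module.Baer R E) :
    Module.Flat R (CharacterModule E) := by
  rw [Module.Flat.iff_forall_isTrivialRelation]
  intro l f x hx
  let φ := Fintype.linearCombination R f
  have : Module.FinitePresentation R (LinearMap.range φ) :=
    hcoh _ (Submodule.FG.of_finite (N := LinearMap.range φ))
  have hk := Module.FinitePresentation.fg_ker φ.rangeRestrict φ.surjective_rangeRestrict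
  rw [LinearMap.ker_rangeRestrict] at hk
  obtain ⟨k, a, ha⟩ := Submodule.fg_iff_exists_fin_generating_family.1 hk
  have ha' : ∀ j, φ (a j) = 0 := fun j => by
    have : a j ∈ LinearMap.ker φ := by rw [← ha]; exact Submodule.subset_span ⟨j, rfl⟩
    exact this
  let β : (Fin l → E) →ₗ[R] (Fin k → E) :=
    LinearMap.pi fun j => ∑ i, a j i • LinearMap.proj i
  let c : CharacterModule (Fin l → E) :=
    ∑ i, CharacterModule.dual (LinearMap.proj (R := R) (φ := fun _ : Fin l => E) i) (x i)
  have hc : ∀ e, c e = ∑ i, x i (e i) := fun e => by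
    rw [sum_char_apply]
    rfl
  obtain ⟨d, hd⟩ := char_factor β c (by
    intro e he
    obtain ⟨g, hg⟩ := baer_factor hE φ (Fintype.linearCombination R e) (by
      rw [← ha, Submodule.span_le]
      rintro _ ⟨j, rfl⟩
      have := congrFun he j
      simpa [β, Fintype.linearCombination_apply] using this)
    have he' : ∀ i, e i = f i • g 1 := fun i => by
      have := hg (Pi.single i 1)
      simp [φ, Fintype.linearCombination_apply_single] at this
      rw [← this, ← map_smul]; simp
    rw [hc]
    have h2 : (∑ i, f i • x i) (g 1) = ∑ i, x i (f i • g 1) := by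
      rw [sum_char_apply]
      rfl
    rw [hx] at h2
    rw [Finset.sum_congr rfl (fun i _ => by rw [he' i]), ← h2]
    rfl)
  refine ⟨k, fun i j => a j i, fun j => CharacterModule.dual (LinearMap.single R (fun _ : Fin k => E) j) d, ?_, ?_⟩
  · intro i
    ext e
    have h1 : x i e = c (Pi.single i e) := by
      rw [hc, Finset.sum_eq_single i]
      · simp
      · intro j _ hj; simp [hj]
      · simp
    have h3 : β (Pi.single i e) = ∑ j, Pi.single j (a j i • e) := by
      rw [Finset.univ_sum_single]
      ext j
      simp only [β, LinearMap.pi_apply, LinearMap.sum_apply, LinearMap.smul_apply, LinearMap.proj_apply]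
      rw [Finset.sum_eq_single i]
      · simp
      · intro j _ hj; simp [hj]
      · simp
    rw [h1, ← hd, h3, map_sum]
    symm
    rw [sum_char_apply]
    rfl
  · intro j
    have := ha' j
    simpa [φ, Fintype.linearCombination_apply, mul_comm] using this

/-- evaluation into the double dual -/
def ev (R : Type u) [CommRing R] (F : Type u) [AddCommGroup F] [Module R F] :
    F →ₗ[R] CharacterModule (CharacterModule F) where
  toFun x := (AddMonoidHom.eval x : (F →+ AddCircle (1 : ℚ)) →+ AddCircle (1 : ℚ))
  map_add' x y := by ext c; exact map_add (c : F →+ _) x y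
  map_smul' r x := rfl

lemma ev_apply (R : Type u) [CommRing R] (F : Type u) [AddCommGroup F] [Module R F] (x : F)
    (c : CharacterModule F) : ev R F x c = c x := rfl

lemma ev_inj (R : Type u) [CommRing R] (F : Type u) [AddCommGroup F] [Module R F] :
    Function.Injective (ev R F) := by
  rw [injective_iff_map_eq_zero]
  intro x hx
  apply CharacterModule.eq_zero_of_character_apply
  intro c
  rw [← ev_apply R, hx]; rfl

lemma inj_of_retract {R : Type u} [CommRing R] {A B : Type u} [AddCommGroup A] [AddCommGroup B]
    [Module R A] [Module R B] (hB : Module.Injective R B) (i : A →ₗ[R] B) (p : B →ₗ[R] A)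
    (h : ∀ a, p (i a) = a) : Module.Injective R A := by
  refine ⟨fun X Y _ _ _ _ j hj g => ?_⟩
  obtain ⟨k, hk⟩ := hB.out j hj (i ∘ₗ g)
  exact ⟨p ∘ₗ k, fun x => by simp [hk, h]⟩

/-- if `i : A → B` has dual split epi and `B` flat, then cokernel is flat -/
lemma flat_coker {R : Type u} [CommRing R] {A B C : Type u} [AddCommGroup A] [AddCommGroup B]
    [AddCommGroup C] [Module R A] [Module R B] [Module R C] [Module.Flat R B]
    (i : A →ₗ[R] B) (p : B →ₗ[R] C) (hp : Function.Surjective p) (hip : Function.Exact i p)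
    (s : CharacterModule A →ₗ[R] CharacterModule B)
    (hs : ∀ c a, s c (i a) = c a) : Module.Flat R C := by
  rw [Module.Flat.iff_characterModule_injective]
  have hB : Module.Injective R (CharacterModule B) :=
    Module.Flat.iff_characterModule_injective.1 inferInstance
  have hinj := CharacterModule.dual_injective_of_surjective p hp
  have hx : ∀ b : CharacterModule B, ∃ c, CharacterModule.dual p c = b - s (CharacterModule.dual i b) := by
    intro b
    obtain ⟨d, hd⟩ := char_factor p (b - s (CharacterModule.dual i b)) (by
      intro x hx
      obtain ⟨a, rfl⟩ := (hip x).1 hx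
      change b (i a) - s (CharacterModule.dual i b) (i a) = 0
      rw [hs]
      exact sub_self _)
    exact ⟨d, by ext x; exact hd x⟩
  let e := LinearEquiv.ofInjective (CharacterModule.dual p) hinj
  let q : CharacterModule B →ₗ[R] LinearMap.range (CharacterModule.dual p) :=
    LinearMap.codRestrict _ (LinearMap.id - s ∘ₗ CharacterModule.dual i) hx
  refine inj_of_retract hB (CharacterModule.dual p) (e.symm.toLinearMap ∘ₗ q) ?_
  intro c
  apply e.injective
  apply Subtype.ext
  simp only [LinearMap.comp_apply, LinearEquiv.coe_coe, LinearEquiv.apply_symm_apply]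
  change CharacterModule.dual p c - s (CharacterModule.dual i (CharacterModule.dual p c)) = CharacterModule.dual p c
  have : CharacterModule.dual i (CharacterModule.dual p c) = 0 := by
    ext a
    change c (p (i a)) = 0
    rw [hip.apply_apply_eq_zero, map_zero]
  rw [this, map_zero, sub_zero]

/-- if `G` flat, `0 → K → P → G → 0` exact then dual splits. -/
lemma exists_section {R : Type u} [CommRing R] {K P G : Type u} [AddCommGroup K] [AddCommGroup P]
    [AddCommGroup G] [Module R K] [Module R P] [Module R G] [Module.Flat R G]
    (i : K →ₗ[R] P) (p : P →ₗ[R] G) (hi : Function.Injective i) (hp : Function.Surjective p)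
    (hip : Function.Exact i p) :
    ∃ s : CharacterModule K →ₗ[R] CharacterModule P, ∀ c k, s c (i k) = c k := by
  have hG : Module.Injective R (CharacterModule G) :=
    Module.Flat.iff_characterModule_injective.1 inferInstance
  obtain ⟨r, hr⟩ := hG.out (CharacterModule.dual p)
    (CharacterModule.dual_injective_of_surjective p hp) LinearMap.id
  let t : CharacterModule P →ₗ[R] CharacterModule P := LinearMap.id - CharacterModule.dual p ∘ₗ r
  have hsurj := CharacterModule.dual_surjective_of_injective i hi
  have hker : LinearMap.ker (CharacterModule.dual i) ≤ LinearMap.ker t := by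
    intro b hb
    obtain ⟨d, hd⟩ := char_factor p b (by
      intro x hx
      obtain ⟨a, rfl⟩ := (hip x).1 hx
      exact DFunLike.congr_fun (show CharacterModule.dual i b = 0 from hb) a)
    have : CharacterModule.dual p d = b := by ext x; exact hd x
    subst this
    change CharacterModule.dual p d - CharacterModule.dual p (r (CharacterModule.dual p d)) = 0
    rw [hr]; exact sub_self _
  let e := (CharacterModule.dual i).quotKerEquivOfSurjective hsurj
  refine ⟨(LinearMap.ker (CharacterModule.dual i)).liftQ t hker ∘ₗ e.symm.toLinearMap, ?_⟩
  intro c k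
  obtain ⟨b, rfl⟩ := hsurj c
  have : e.symm (CharacterModule.dual i b) = Submodule.Quotient.mk b := by
    rw [LinearEquiv.symm_apply_eq]; rfl
  simp only [LinearMap.comp_apply, LinearEquiv.coe_coe, this, Submodule.liftQ_apply]
  change b (i k) - r b (p (i k)) = b (i k)
  rw [hip.apply_apply_eq_zero, map_zero, sub_zero]

lemma extend_to_dual {R : Type u} [CommRing R] {K P G N : Type u} [AddCommGroup K] [AddCommGroup P]
    [AddCommGroup G] [Module R K] [Module R P] [Module R G] [Module.Flat R G]
    [AddCommGroup N] [Module R N]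
    (i : K →ₗ[R] P) (p : P →ₗ[R] G) (hi : Function.Injective i) (hp : Function.Surjective p)
    (hip : Function.Exact i p) (f : K →ₗ[R] CharacterModule N) :
    ∃ g : P →ₗ[R] CharacterModule N, ∀ k, g (i k) = f k := by
  obtain ⟨s, hs⟩ := exists_section i p hi hp hip
  let f' : N →ₗ[R] CharacterModule K := CharacterModule.dual f ∘ₗ ev R N
  refine ⟨CharacterModule.dual (s ∘ₗ f') ∘ₗ ev R P, fun k => ?_⟩
  ext n
  exact hs (f' n) k

lemma flat_ker {R : Type u} [CommRing R] {K P G : Type u} [AddCommGroup K] [AddCommGroup P]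
    [AddCommGroup G] [Module R K] [Module R P] [Module R G] [Module.Flat R G] [Module.Flat R P]
    (i : K →ₗ[R] P) (p : P →ₗ[R] G) (hi : Function.Injective i) (hp : Function.Surjective p)
    (hip : Function.Exact i p) : Module.Flat R K := by
  obtain ⟨s, hs⟩ := exists_section i p hi hp hip
  rw [Module.Flat.iff_characterModule_injective]
  exact inj_of_retract (Module.Flat.iff_characterModule_injective.1 ‹Module.Flat R P›) s
    (CharacterModule.dual i) (fun c => by ext k; exact hs c k)

/-- submodules of finite free modules over coherent rings -/
lemma fp_sub {R : Type u} [CommRing R] (hcoh : IsCoherentRing R) (k : ℕ) :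
    ∀ (K : Type u) [AddCommGroup K] [Module R K] [Module.Finite R K] (i : K →ₗ[R] (Fin k → R)),
      Function.Injective i → Module.FinitePresentation R K := by
  induction k with
  | zero =>
    intro K _ _ _ i hi
    have : Subsingleton K := hi.subsingleton
    infer_instance
  | succ k ih =>
    intro K _ _ _ i hi
    let φ : K →ₗ[R] R := LinearMap.proj 0 ∘ₗ i
    have : Module.FinitePresentation R (LinearMap.range φ) :=
      hcoh _ (Submodule.FG.of_finite (N := LinearMap.range φ))
    have hk := Module.FinitePresentation.fg_ker φ.rangeRestrict φ.surjective_rangeRestrict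
    have : Module.Finite R (LinearMap.ker φ.rangeRestrict) := Module.Finite.of_fg hk
    have := ih (LinearMap.ker φ.rangeRestrict)
      (LinearMap.funLeft R R Fin.succ ∘ₗ i ∘ₗ Submodule.subtype _) (by
        intro x y hxy
        apply Subtype.ext
        apply hi
        ext j
        refine Fin.cases ?_ (fun j => congrFun hxy j) j
        have hx : φ x = 0 := congrArg Subtype.val x.2
        have hy : φ y = 0 := congrArg Subtype.val y.2
        exact hx.trans hy.symm)
    exact Module.finitePresentation_of_ker φ.rangeRestrict φ.surjective_rangeRestrict

lemma bridge {R : Type u} [CommRing R] (M N : ModuleCat.{u} R) (j : ℕ) :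
    ExtVanish R M N (j + 1) ↔ Subsingleton (Abelian.Ext.{u} M N (j + 1)) := by
  let P := projectiveResolution M
  have h1 : ExtVanish R M N (j + 1) ↔
      ∀ f : P.complex.X (j + 1) ⟶ N, P.complex.d (j + 2) (j + 1) ≫ f = 0 →
        ∃ g : P.complex.X j ⟶ N, P.complex.d (j + 1) j ≫ g = f := by
    have e := P.isoExt (R := R) (j + 1) N
    unfold ExtVanish extGroup
    rw [← ModuleCat.isZero_iff_subsingleton, e.isZero_iff,
      ← HomologicalComplex.exactAt_iff_isZero_homology,
      HomologicalComplex.exactAt_iff' _ j (j + 1) (j + 2) (by simp) (by simp),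
      ShortComplex.moduleCat_exact_iff]
    rfl
  rw [h1]
  constructor
  · intro h
    refine subsingleton_of_forall_eq 0 fun x => ?_
    obtain ⟨f, hf, rfl⟩ := P.extMk_surjective x (j + 2) rfl
    exact (P.extMk_eq_zero_iff f (j + 2) rfl hf j rfl).2 (h f hf)
  · intro h f hf
    exact (P.extMk_eq_zero_iff f (j + 2) rfl hf j rfl).1 (Subsingleton.elim _ _)

open Abelian in
lemma ext_one_of_extend {R : Type u} [CommRing R] {S : ShortComplex (ModuleCat.{u} R)}
    (hS : S.ShortExact) (Y : ModuleCat.{u} R) [Projective S.X₂]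
    (h : ∀ f : S.X₁ ⟶ Y, ∃ g : S.X₂ ⟶ Y, S.f ≫ g = f) :
    Subsingleton (Abelian.Ext.{u} S.X₃ Y 1) := by
  refine subsingleton_of_forall_eq 0 fun x => ?_
  obtain ⟨y, rfl⟩ := Ext.contravariant_sequence_exact₃ hS Y x (Ext.eq_zero_of_projective _)
    (add_zero 1)
  obtain ⟨f, rfl⟩ := Ext.homEquiv₀.symm.surjective y
  obtain ⟨g, rfl⟩ := h f
  simp only [Ext.homEquiv₀_symm_apply]
  rw [← Ext.mk₀_comp_mk₀]
  exact hS.extClass_comp_assoc _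

open Abelian in
lemma extend_of_ext_one {R : Type u} [CommRing R] {S : ShortComplex (ModuleCat.{u} R)}
    (hS : S.ShortExact) (Y : ModuleCat.{u} R)
    (h : Subsingleton (Abelian.Ext.{u} S.X₃ Y 1)) (f : S.X₁ ⟶ Y) :
    ∃ g : S.X₂ ⟶ Y, S.f ≫ g = f := by
  obtain ⟨φ, hφ⟩ := Ext.contravariant_sequence_exact₁ hS _
    (Ext.mk₀ f) (add_zero 1) (Subsingleton.elim _ _)
  obtain ⟨φ, rfl⟩ := Ext.homEquiv₀.symm.surjective φ
  exact ⟨φ, Ext.homEquiv₀.symm.injective (by simpa using hφ)⟩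

open Abelian in
lemma shift_up {R : Type u} [CommRing R] {S : ShortComplex (ModuleCat.{u} R)}
    (hS : S.ShortExact) (Y : ModuleCat.{u} R) [Projective S.X₂] (k : ℕ)
    (h : Subsingleton (Abelian.Ext.{u} S.X₁ Y k)) :
    Subsingleton (Abelian.Ext.{u} S.X₃ Y (k + 1)) := by
  refine subsingleton_of_forall_eq 0 fun x => ?_
  obtain ⟨y, rfl⟩ := Ext.contravariant_sequence_exact₃ hS Y x (Ext.eq_zero_of_projective _)
    (add_comm 1 k)
  rw [Subsingleton.elim y 0, Ext.comp_zero]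

open Abelian in
lemma shift_down {R : Type u} [CommRing R] {S : ShortComplex (ModuleCat.{u} R)}
    (hS : S.ShortExact) (Y : ModuleCat.{u} R) [Projective S.X₂] (k : ℕ)
    (h : Subsingleton (Abelian.Ext.{u} S.X₃ Y (k + 2))) :
    Subsingleton (Abelian.Ext.{u} S.X₁ Y (k + 1)) := by
  refine subsingleton_of_forall_eq 0 fun x => ?_
  obtain ⟨y, rfl⟩ := Ext.contravariant_sequence_exact₁ hS Y x (add_comm 1 (k + 1))
    (Subsingleton.elim _ _)
  rw [Ext.eq_zero_of_projective y, Ext.comp_zero]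

open Abelian in
/-- covariant shift: `Ext^{k+1}(M,X₁)=0` and `Ext^k(M,X₂)=0` imply `Ext^k(M,X₃)=0`. -/
lemma shift_cov {R : Type u} [CommRing R] {S : ShortComplex (ModuleCat.{u} R)}
    (hS : S.ShortExact) (M : ModuleCat.{u} R) (k : ℕ)
    (h₁ : Subsingleton (Abelian.Ext.{u} M S.X₁ (k + 1)))
    (h₂ : Subsingleton (Abelian.Ext.{u} M S.X₂ k)) :
    Subsingleton (Abelian.Ext.{u} M S.X₃ k) := by
  refine subsingleton_of_forall_eq 0 fun x => ?_
  obtain ⟨y, rfl⟩ := Ext.covariant_sequence_exact₃ M hS x rfl (Subsingleton.elim _ _)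
  rw [Subsingleton.elim y 0, Ext.zero_comp]

lemma exact_fun {R : Type u} [CommRing R] {S : ShortComplex (ModuleCat.{u} R)}
    (hS : S.ShortExact) : Function.Exact S.f.hom S.g.hom :=
  (ShortComplex.ShortExact.moduleCat_exact_iff_function_exact S).1 hS.exact

/-- (C) -/
lemma ext_flat_dual {R : Type u} [CommRing R] (N : Type u) [AddCommGroup N] [Module R N] (k : ℕ) :
    ∀ (G : ModuleCat.{u} R), Module.Flat R G →
      Subsingleton (Abelian.Ext.{u} G (ModuleCat.of R (CharacterModule N)) (k + 1)) := by
  induction k with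
  | zero =>
    intro G hG
    have hS := G.shortExact_projectiveShortComplex
    refine ext_one_of_extend hS _ fun f => ?_
    obtain ⟨g, hg⟩ := extend_to_dual G.projectiveShortComplex.f.hom G.projectiveShortComplex.g.hom
      hS.moduleCat_injective_f hS.moduleCat_surjective_g (exact_fun hS) f.hom
    exact ⟨ModuleCat.ofHom g, by ext k : 2; exact hg k⟩
  | succ k ih =>
    intro G hG
    have hS := G.shortExact_projectiveShortComplex
    refine shift_up hS _ (k + 1) (ih _ ?_)
    exact flat_ker G.projectiveShortComplex.f.hom G.projectiveShortComplex.g.hom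
      hS.moduleCat_injective_f hS.moduleCat_surjective_g (exact_fun hS)

/-- Ext from f.p. modules to flat modules. -/
lemma ext_fp_flat {R : Type u} [CommRing R] (hcoh : IsCoherentRing R) (k : ℕ) :
    ∀ (M : ModuleCat.{u} R), Module.FinitePresentation R M →
      Subsingleton (Abelian.Ext.{u} M (ModuleCat.of R R) (k + 1)) →
      ∀ F : ModuleCat.{u} R, Module.Flat R F → Subsingleton (Abelian.Ext.{u} M F (k + 1)) := by
  have key : ∀ (M : ModuleCat.{u} R), Module.FinitePresentation R M →
      ∃ S : ShortComplex (ModuleCat.{u} R), S.ShortExact ∧ Projective S.X₂ ∧ S.X₃ = M ∧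
        Module.FinitePresentation R S.X₁ := by
    intro M hM
    obtain ⟨a, p, hp⟩ := Module.Finite.exists_fin' R M
    refine ⟨p.shortComplexKer, LinearMap.shortExact_shortComplexKer hp, ?_, rfl, ?_⟩
    · exact ModuleCat.projective_of_free (Pi.basisFun R (Fin a))
    · have := Module.FinitePresentation.fg_ker p hp
      have : Module.Finite R (LinearMap.ker p) := Module.Finite.of_fg this
      exact fp_sub hcoh a (LinearMap.ker p) (Submodule.subtype _) (Submodule.subtype_injective _)
  induction k with
  | zero =>
    intro M hM h F hF
    obtain ⟨S, hS, _, rfl, hK⟩ := key M hM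
    refine ext_one_of_extend hS _ fun f => ?_
    obtain ⟨c, a, y, hay⟩ := Module.Flat.exists_factorization_of_finitePresentation f.hom
    have : ∀ j : Fin c, ∃ b : S.X₂ ⟶ ModuleCat.of R R,
        S.f ≫ b = ModuleCat.ofHom (Finsupp.lapply j ∘ₗ a) :=
      fun j => extend_of_ext_one hS _ h _
    choose b hb using this
    refine ⟨ModuleCat.ofHom (y ∘ₗ (Finsupp.linearEquivFunOnFinite R R (Fin c)).symm.toLinearMap ∘ₗ
      LinearMap.pi fun j => (b j).hom), ?_⟩
    ext x : 2
    have hx : ∀ j, (b j).hom (S.f.hom x) = a x j := fun j =>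
      LinearMap.congr_fun (congrArg ModuleCat.Hom.hom (hb j)) x
    rw [hay]
    change y _ = y (a x)
    congr 1
    ext j
    exact hx j
  | succ k ih =>
    intro M hM h F hF
    obtain ⟨S, hS, _, rfl, hK⟩ := key M hM
    exact shift_up hS _ (k + 1) (ih _ hK (shift_down hS _ k h) F hF)

/-- (D) -/
lemma inj_dim_dual {R : Type u} [CommRing R] (n : ℕ) :
    ∀ (N : Type u) [AddCommGroup N] [Module R N],
    (∀ I : Ideal R, I.FG → Subsingleton (Abelian.Ext.{u} (ModuleCat.of R (R ⧸ I))
      (ModuleCat.of R (CharacterModule N)) (n + 1))) →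
    HasInjectiveDimensionLT (ModuleCat.of R (CharacterModule N)) (n + 1) := by
  induction n with
  | zero =>
    intro N _ _ h
    have : Module.Flat R N := by
      rw [Module.Flat.iff_rTensor_injective]
      intro I hI
      rw [rTensor_injective_iff_lcomp_surjective]
      intro f
      let S : ShortComplex (ModuleCat.{u} R) := ShortComplex.mk
        (ModuleCat.ofHom I.subtype) (ModuleCat.ofHom (Submodule.mkQ I)) (by
          ext x : 2
          exact (Submodule.Quotient.mk_eq_zero I).2 x.2)
      have hS : S.ShortExact := ModuleCat.shortComplex_shortExact S
        (LinearMap.exact_subtype_mkQ I) (Submodule.subtype_injective _) (Submodule.mkQ_surjective I)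
      obtain ⟨g, hg⟩ := extend_of_ext_one hS _ (h I hI) (ModuleCat.ofHom f)
      exact ⟨g.hom, congrArg ModuleCat.Hom.hom hg⟩
    have : Module.Injective R (CharacterModule N) :=
      Module.Flat.iff_characterModule_injective.1 this
    have := Module.injective_object_of_injective_module R (CharacterModule N)
    infer_instance
  | succ n ih =>
    intro N _ _ h
    let T := (ModuleCat.of R N).projectiveShortComplex
    have hT : T.ShortExact := (ModuleCat.of R N).shortExact_projectiveShortComplex
    let S : ShortComplex (ModuleCat.{u} R) := ShortComplex.mk
        (ModuleCat.ofHom (CharacterModule.dual T.g.hom))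
        (ModuleCat.ofHom (CharacterModule.dual T.f.hom)) (by
          rw [← ModuleCat.ofHom_comp, ← CharacterModule.dual_comp, ← ModuleCat.hom_comp, T.zero]
          rw [ModuleCat.hom_zero, CharacterModule.dual_zero]; rfl)
    have hS : S.ShortExact := by
      refine ModuleCat.shortComplex_shortExact S ?_
        (CharacterModule.dual_injective_of_surjective _ hT.moduleCat_surjective_g)
        (CharacterModule.dual_surjective_of_injective _ hT.moduleCat_injective_f)
      intro b
      constructor
      · intro hb
        obtain ⟨d, hd⟩ := char_factor T.g.hom b (by
          intro x hx
          obtain ⟨a, rfl⟩ := (exact_fun hT x).1 hx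
          exact DFunLike.congr_fun (show CharacterModule.dual T.f.hom b = 0 from hb) a)
        exact ⟨d, DFunLike.ext _ _ hd⟩
      · rintro ⟨d, rfl⟩
        exact DFunLike.ext _ _ fun a => by
          change d (T.g.hom (T.f.hom a)) = 0
          rw [(exact_fun hT).apply_apply_eq_zero, map_zero]
    have hinj : Injective S.X₂ := by
      have : Module.Flat R T.X₂ := inferInstance
      have : Module.Injective R (CharacterModule T.X₂) :=
        Module.Flat.iff_characterModule_injective.1 this
      exact Module.injective_object_of_injective_module R (CharacterModule T.X₂)
    refine hS.hasInjectiveDimensionLT_X₁ (n + 1) (ih T.X₁ fun I hI => ?_) inferInstance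
    exact shift_cov hS _ (n + 1) (h I hI)
      (HasInjectiveDimensionLT.subsingleton S.X₂ 1 (n + 1) (by omega) _)

lemma inj_dim_flat {R : Type u} [CommRing R] (n : ℕ)
    (hcoh : IsCoherentRing R)
    (hFC : ∀ (P : ModuleCat.{u} R), Module.FinitePresentation R P →
      Subsingleton (Abelian.Ext.{u} P (ModuleCat.of R R) (n + 1))) (k : ℕ) :
    ∀ F : ModuleCat.{u} R, Module.Flat R F →
      (∀ G : ModuleCat.{u} R, Module.Flat R G → Subsingleton (Abelian.Ext.{u} G F (k + 1))) →
      HasInjectiveDimensionLT F (n + k + 1) := by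
  have key : ∀ F : ModuleCat.{u} R, Module.Flat R F →
      ∃ S : ShortComplex (ModuleCat.{u} R), S.ShortExact ∧ S.X₁ = F ∧ Module.Flat R S.X₃ ∧
        HasInjectiveDimensionLT S.X₂ (n + 1) ∧
        ∀ G : ModuleCat.{u} R, Module.Flat R G → ∀ k, Subsingleton (Abelian.Ext.{u} G S.X₂ (k + 1)) := by
    intro F hF
    let C := CharacterModule (CharacterModule F)
    have hE : Module.Injective R (CharacterModule F) :=
      Module.Flat.iff_characterModule_injective.1 hF
    have hC : Module.Flat R C := flat_dual hcoh _ (Module.Baer.of_injective hE)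
    let S : ShortComplex (ModuleCat.{u} R) := ShortComplex.mk
        (ModuleCat.ofHom (ev R F)) (ModuleCat.ofHom (Submodule.mkQ (LinearMap.range (ev R F))))
        (by ext x; simp)
    have hex : Function.Exact (ev R F) (Submodule.mkQ (LinearMap.range (ev R F))) :=
      LinearMap.exact_map_mkQ_range _
    refine ⟨S, ModuleCat.shortComplex_shortExact S hex
      (ev_inj R F) (Submodule.mkQ_surjective _), rfl, ?_, ?_, ?_⟩
    · exact flat_coker (ev R F) _ (Submodule.mkQ_surjective _) hex (ev R (CharacterModule F))
        (fun c a => rfl)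
    · refine inj_dim_dual n (CharacterModule F) fun I hI => ?_
      have hfp : Module.FinitePresentation R (R ⧸ I) :=
        Module.finitePresentation_of_surjective (Submodule.mkQ I) (Submodule.mkQ_surjective I)
          (by rwa [Submodule.ker_mkQ])
      exact ext_fp_flat hcoh n _ hfp (hFC _ hfp) _ hC
    · intro G hG k
      exact ext_flat_dual (CharacterModule F) k G hG
  induction k with
  | zero =>
    intro F hF h
    obtain ⟨S, hS, rfl, h3, h2, -⟩ := key F hF
    obtain ⟨g, hg⟩ := extend_of_ext_one hS _ (h _ h3) (𝟙 _)
    exact Retract.hasInjectiveDimensionLT ⟨S.f, g, hg⟩ (n + 1)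
  | succ k ih =>
    intro F hF h
    obtain ⟨S, hS, rfl, h3, h2, h4⟩ := key F hF
    refine hS.hasInjectiveDimensionLT_X₁ (n + k + 1) (ih _ h3 fun G hG => ?_)
      (hasInjectiveDimensionLT_of_ge _ (n + 1) _ (by omega))
    exact shift_cov hS G (k + 1) (h G hG) (h4 G hG k)

lemma inj_dim_of_projdim {R : Type u} [CommRing R] (N : ℕ)
    (h : ∀ F : ModuleCat.{u} R, Module.Flat R F → HasInjectiveDimensionLT F N) (k : ℕ) :
    ∀ Q : ModuleCat.{u} R, HasProjectiveDimensionLT Q (k + 1) → HasInjectiveDimensionLT Q N := by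
  induction k with
  | zero =>
    intro Q hQ
    have : Projective Q := projective_iff_hasProjectiveDimensionLT_one.2 hQ
    have : Module.Projective R Q := (IsProjective.iff_projective Q).2 this
    exact h Q inferInstance
  | succ k ih =>
    intro Q hQ
    have hS := Q.shortExact_projectiveShortComplex
    have hp : Projective Q.projectiveShortComplex.X₂ :=
      (IsProjective.iff_projective (R := R) Q.projectiveShortComplex.X₂).1 inferInstance
    have h1 := (hS.hasProjectiveDimensionLT_X₃_iff k hp).1 hQ
    have := ih _ h1
    exact hS.hasInjectiveDimensionLT_X₃ N (h _ inferInstance)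
      (hasInjectiveDimensionLT_of_ge _ N _ (by omega))

end GG

theorem stmt0 (R : Type u) [CommRing R] (n m : ℕ)
    (hcoh : IsCoherentRing R)
    (hFC : ∀ (P : ModuleCat.{u} R), Module.FinitePresentation R P →
      ExtVanish R P (ModuleCat.of R R) (n + 1))
    (hperf : ∀ (F : ModuleCat.{u} R), Module.Flat R F → ProjDimLE R F m) :
    ∀ (M Q : ModuleCat.{u} R), HasFinProjDim R Q →
      ∀ j : ℕ, n + m < j → ExtVanish R M Q j := by
  rintro M Q ⟨k, hk⟩ j hj
  have hQ : HasProjectiveDimensionLT Q (k + 1) := by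
    refine HasProjectiveDimensionLT.mk (fun i hi Y e => ?_)
    obtain ⟨i, rfl⟩ := Nat.exists_eq_add_of_le' (show 1 ≤ i by omega)
    have := (GG.bridge Q Y i).1 (hk Y (i + 1) (by omega))
    exact Subsingleton.elim _ _
  have hid : HasInjectiveDimensionLT Q (n + m + 1) :=
    GG.inj_dim_of_projdim _ (fun F hF => GG.inj_dim_flat n hcoh
      (fun P hP => (GG.bridge _ _ _).1 (hFC P hP)) m F hF
      (fun G hG => (GG.bridge _ _ _).1 (hperf G hG F (m + 1) (by omega)))) k Q hQ
  obtain ⟨j, rfl⟩ := Nat.exists_eq_add_of_le' (show 1 ≤ j by omega)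
  exact (GG.bridge _ _ _).2 (HasInjectiveDimensionLT.subsingleton Q (n + m + 1) (j + 1) (by omega) M)

end
end

section
/- Let R be a commutative coherent ring that is n-FC (Ext_R^{n+1}(P, R) = 0 for every finitely presented R-module P) and m-perfect (every flat R-module has projective dimension at most m), for some nonnegative integers n and m. If M is an R-module such that Ext_R^i(M, Q) = 0 for every integer i ≥ 1 and every R-module Q of finite projective dimension, then there exists an injective R-module homomorphism from M into a projective R-module. -/
open CategoryTheory

noncomputable section

universe u

theorem extVanish_iff (R : Type u) [CommRing R] (X Y : ModuleCat.{u} R) (k : ℕ) :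
    ExtVanish R X Y (k+1) ↔ Subsingleton (Abelian.Ext.{u} X Y (k+1)) := by
  let P := projectiveResolution X
  have h1 : ExtVanish R X Y (k+1) ↔ ∀ f : P.complex.X (k+1) ⟶ Y, P.complex.d (k+2) (k+1) ≫ f = 0 →
      ∃ g : P.complex.X k ⟶ Y, P.complex.d (k+1) k ≫ g = f := by
    unfold ExtVanish extGroup
    rw [← ModuleCat.isZero_iff_subsingleton, (P.isoExt (R := R) (k+1) Y).isZero_iff,
      ← HomologicalComplex.exactAt_iff_isZero_homology,
      HomologicalComplex.exactAt_iff' _ k (k+1) (k+2) (by simp) (by simp),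
      ShortComplex.moduleCat_exact_iff]
    rfl
  rw [h1]
  constructor
  · intro h
    refine ⟨fun a b => ?_⟩
    have : ∀ a : Abelian.Ext.{u} X Y (k+1), a = 0 := by
      intro a
      obtain ⟨f, hf, rfl⟩ := P.extMk_surjective a (k+2) rfl
      rw [P.extMk_eq_zero_iff _ _ _ _ k rfl]
      exact h f hf
    rw [this a, this b]
  · intro h f hf
    rw [← P.extMk_eq_zero_iff f (k+2) rfl hf k rfl]
    exact Subsingleton.elim _ _
open TensorProduct

theorem fp_of_inj {R : Type u} [CommRing R] (hcoh : IsCoherentRing R) (k : ℕ) :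
    ∀ (N : Type u) [AddCommGroup N] [Module R N] [Module.Finite R N]
      (f : N →ₗ[R] (Fin k → R)), Function.Injective f → Module.FinitePresentation R N := by
  induction k with
  | zero =>
    intro N _ _ _ f hf
    have : Subsingleton N := hf.subsingleton
    exact Module.finitePresentation_of_projective R N
  | succ k ih =>
    intro N _ _ _ f hf
    let p : N →ₗ[R] R := (LinearMap.proj 0) ∘ₗ f
    have hI : (LinearMap.range p).FG := by
      rw [← Module.Finite.iff_fg]; infer_instance
    have := hcoh _ hI
    have hfin : (LinearMap.ker p.rangeRestrict).FG :=
      Module.FinitePresentation.fg_ker p.rangeRestrict p.surjective_rangeRestrict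
    rw [← Module.Finite.iff_fg] at hfin
    have := ih (LinearMap.ker p.rangeRestrict)
      ((LinearMap.funLeft R R Fin.succ) ∘ₗ f ∘ₗ (LinearMap.ker p.rangeRestrict).subtype) (by
        rw [← LinearMap.ker_eq_bot, LinearMap.ker_eq_bot']
        rintro ⟨x, hx⟩ h
        have hx0 : f x 0 = 0 := by
          simpa [p, Subtype.ext_iff] using hx
        have : f x = 0 := by
          funext i
          refine Fin.cases hx0 (fun j => ?_) i
          exact congrFun h j
        ext
        exact hf (by simpa using this))
    exact Module.finitePresentation_of_ker p.rangeRestrict p.surjective_rangeRestrict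

section
variable {R : Type u} [CommRing R]

/-- The biduality map. -/
def bid (X E : Type u) [AddCommGroup X] [Module R X] [AddCommGroup E] [Module R E] :
    X ⊗[R] E →ₗ[R] ((X →ₗ[R] R) →ₗ[R] E) :=
  TensorProduct.lift
    (LinearMap.mk₂ R (fun x e => (LinearMap.toSpanSingleton R E e) ∘ₗ (LinearMap.applyₗ x))
      (by intros; ext; simp [add_smul]) (by intros; ext; simp [mul_smul])
      (by intros; ext; simp) (by intro c x e; ext g; simp [smul_smul, mul_comm]))

theorem bid_tmul (X E : Type u) [AddCommGroup X] [Module R X] [AddCommGroup E] [Module R E]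
    (x : X) (e : E) (g : X →ₗ[R] R) : bid X E (x ⊗ₜ[R] e) g = g x • e := by
  simp [bid]

theorem bid_nat {X Y E : Type u} [AddCommGroup X] [Module R X] [AddCommGroup Y] [Module R Y]
    [AddCommGroup E] [Module R E] (h : X →ₗ[R] Y) (t : X ⊗[R] E) (g : Y →ₗ[R] R) :
    bid Y E (h.rTensor E t) g = bid X E t (g ∘ₗ h) := by
  induction t with
  | zero => simp
  | tmul x e => simp [bid_tmul]
  | add a b ha hb => simp [ha, hb]

theorem bid_free_surj (k : ℕ) (E : Type u) [AddCommGroup E] [Module R E] :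
    Function.Surjective (bid (R := R) (Fin k → R) E) := by
  intro φ
  refine ⟨∑ i, (Pi.single i 1) ⊗ₜ φ (LinearMap.proj i), ?_⟩
  ext g
  rw [map_sum, LinearMap.sum_apply]
  simp_rw [bid_tmul, ← map_smul, ← map_sum]
  congr 1
  ext i
  simp [Pi.single_apply]

theorem bid_free_inj (k : ℕ) (E : Type u) [AddCommGroup E] [Module R E] :
    Function.Injective (bid (R := R) (Fin k → R) E) := by
  rw [← LinearMap.ker_eq_bot, LinearMap.ker_eq_bot']
  intro t ht
  have key : ∀ t : (Fin k → R) ⊗[R] E,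
      t = ∑ i, (Pi.single i 1) ⊗ₜ (bid (R := R) (Fin k → R) E t (LinearMap.proj i)) := by
    intro t
    induction t with
    | zero => simp
    | tmul x e =>
      simp_rw [bid_tmul, ← TensorProduct.smul_tmul, ← TensorProduct.sum_tmul]
      congr 1
      ext i
      simp [Pi.single_apply]
    | add a b ha hb =>
      simp only [map_add, LinearMap.add_apply, TensorProduct.tmul_add, Finset.sum_add_distrib]
      rw [← ha, ← hb]
  rw [key t, ht]
  simp

theorem inj_extend {E : Type u} [AddCommGroup E] [Module R E] [Module.Injective R E]
    {A B : Type u} [AddCommGroup A] [Module R A] [AddCommGroup B] [Module R B]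
    (f : A →ₗ[R] B) (g : A →ₗ[R] E) (h : ∀ a, f a = 0 → g a = 0) :
    ∃ l : B →ₗ[R] E, ∀ a, l (f a) = g a := by
  have hle : LinearMap.ker f ≤ LinearMap.ker g := fun a ha => h a ha
  obtain ⟨l, hl⟩ := Module.Injective.out ((LinearMap.ker f).liftQ f le_rfl)
    (by rw [← LinearMap.ker_eq_bot]; exact Submodule.ker_liftQ_eq_bot _ _ _ le_rfl)
    ((LinearMap.ker f).liftQ g hle)
  refine ⟨l, fun a => ?_⟩
  simpa using hl (Submodule.Quotient.mk a)

theorem bid_fp_inj (X E : Type u) [AddCommGroup X] [Module R X] [AddCommGroup E] [Module R E]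
    [Module.FinitePresentation R X] [Module.Injective R E] :
    Function.Injective (bid (R := R) X E) := by
  rw [← LinearMap.ker_eq_bot, LinearMap.ker_eq_bot']
  intro t ht
  obtain ⟨a, b, f, g, hf, hfg⟩ := Module.FinitePresentation.exists_fin' R X
  obtain ⟨y, rfl⟩ := LinearMap.rTensor_surjective E hf t
  -- `bid y` kills maps factoring through `f`
  obtain ⟨l, hl⟩ := inj_extend (E := E) (LinearMap.lcomp R R g)
    (bid (R := R) (Fin a → R) E y) (by
      intro u hu
      have hle : LinearMap.ker f ≤ LinearMap.ker u := by
        intro v hv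
        obtain ⟨w, rfl⟩ := (hfg v).1 hv
        exact LinearMap.congr_fun hu w
      let e := f.quotKerEquivOfSurjective hf
      let u' : X →ₗ[R] R := ((LinearMap.ker f).liftQ u hle) ∘ₗ e.symm.toLinearMap
      have hu' : u' ∘ₗ f = u := by
        refine LinearMap.ext fun v => ?_
        have : e.symm (f v) = Submodule.Quotient.mk v := by
          rw [LinearEquiv.symm_apply_eq]; rfl
        simp [u', this]
      rw [← hu', ← bid_nat, ht]; rfl)
  obtain ⟨z, rfl⟩ := bid_free_surj b E l
  have : y = g.rTensor E z := by
    apply bid_free_inj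
    ext u
    rw [bid_nat]
    exact (hl u).symm
  rw [this, ← LinearMap.comp_apply, ← LinearMap.rTensor_comp, hfg.linearMap_comp_eq_zero]
  simp

/-- Base case. -/
theorem tor_base {W F : Type u} (E : Type u) [AddCommGroup W] [Module R W] [AddCommGroup F]
    [Module R F] [AddCommGroup E] [Module R E]
    [Module.FinitePresentation R W] [Module.Injective R E] (i : W →ₗ[R] F)
    (h : ∀ g : W →ₗ[R] R, ∃ g' : F →ₗ[R] R, g' ∘ₗ i = g) :
    Function.Injective (i.rTensor E) := by
  rw [← LinearMap.ker_eq_bot, LinearMap.ker_eq_bot']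
  intro t ht
  apply bid_fp_inj
  ext g
  obtain ⟨g', rfl⟩ := h g
  rw [← bid_nat, ht]
  simp

/-- Swap: `Ω' → F → Ω`, `E' → L → E`. -/
theorem tor_swap {W F N A L E : Type u} [AddCommGroup W] [Module R W] [AddCommGroup F]
    [Module R F] [AddCommGroup N] [Module R N] [AddCommGroup A] [Module R A] [AddCommGroup L]
    [Module R L] [AddCommGroup E] [Module R E] [Module.Flat R F]
    (i : W →ₗ[R] F) (p : F →ₗ[R] N) (hp : Function.Surjective p) (hip : Function.Exact i p)
    (j : A →ₗ[R] L) (q : L →ₗ[R] E) (hj : Function.Injective j) (hq : Function.Surjective q)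
    (hjq : Function.Exact j q) (h : Function.Injective (i.rTensor E)) :
    Function.Injective (j.lTensor N) := by
  have c : ∀ {A B C D : Type u} [AddCommGroup A] [Module R A] [AddCommGroup B] [Module R B]
      [AddCommGroup C] [Module R C] [AddCommGroup D] [Module R D] (f : A →ₗ[R] B) (g : C →ₗ[R] D)
      (t : A ⊗[R] C), f.rTensor D (g.lTensor A t) = g.lTensor B (f.rTensor C t) := by
    intros
    simp only [← LinearMap.comp_apply, LinearMap.rTensor_comp_lTensor,
      LinearMap.lTensor_comp_rTensor]
  rw [← LinearMap.ker_eq_bot, LinearMap.ker_eq_bot']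
  intro t ht
  obtain ⟨y, rfl⟩ := LinearMap.rTensor_surjective A hp t
  rw [← c] at ht
  obtain ⟨z, hz⟩ := (rTensor_exact L hip hp _).1 ht
  have hz2 : q.lTensor W z = 0 := by
    apply h
    rw [c, hz, map_zero]
    exact (lTensor_exact F hjq hq _).2 ⟨y, rfl⟩
  obtain ⟨w, rfl⟩ := (lTensor_exact W hjq hq _).1 hz2
  rw [c] at hz
  have := Module.Flat.lTensor_preserves_injective_linearMap (M := F) j hj hz
  rw [← this]
  exact (rTensor_exact A hip hp _).2 ⟨w, rfl⟩
end
theorem projDimLE_iff (R : Type u) [CommRing R] (X : ModuleCat.{u} R) (d : ℕ) :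
    ProjDimLE R X d ↔ HasProjectiveDimensionLT X (d+1) := by
  rw [hasProjectiveDimensionLT_iff.{u}]
  constructor
  · intro h i hi Y e
    obtain ⟨k, rfl⟩ : ∃ k, i = k + 1 := ⟨i - 1, by omega⟩
    have := (extVanish_iff R X Y k).1 (h Y (k+1) (by omega))
    exact Subsingleton.elim _ _
  · intro h Y i hi
    obtain ⟨k, rfl⟩ : ∃ k, i = k + 1 := ⟨i - 1, by omega⟩
    rw [extVanish_iff]
    exact ⟨fun a b => by rw [h _ hi a, h _ hi b]⟩

section
variable {R : Type u} [CommRing R]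


/-- The short complex attached to an exact pair. -/
def scOf {W F N : ModuleCat.{u} R} (i : W →ₗ[R] F) (p : F →ₗ[R] N)
    (hip : Function.Exact i p) : ShortComplex (ModuleCat.{u} R) :=
  ShortComplex.mk (ModuleCat.ofHom i) (ModuleCat.ofHom p) (by
    rw [← ModuleCat.ofHom_comp, hip.linearMap_comp_eq_zero]; rfl)

theorem scOf_shortExact {W F N : ModuleCat.{u} R} (i : W →ₗ[R] F) (p : F →ₗ[R] N)
    (hi : Function.Injective i) (hp : Function.Surjective p) (hip : Function.Exact i p) :
    (scOf i p hip).ShortExact where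
  exact := (ShortComplex.ShortExact.moduleCat_exact_iff_function_exact _).2 hip
  mono_f := (ModuleCat.mono_iff_injective _).2 hi
  epi_g := (ModuleCat.epi_iff_surjective _).2 hp

theorem ext_one_extend {W F N Y : ModuleCat.{u} R} (i : W →ₗ[R] F) (p : F →ₗ[R] N)
    (hi : Function.Injective i) (hp : Function.Surjective p) (hip : Function.Exact i p)
    (h : Subsingleton (Abelian.Ext.{u} N Y 1)) (g : W →ₗ[R] Y) :
    ∃ g' : F →ₗ[R] Y, g' ∘ₗ i = g := by
  obtain ⟨x, hx⟩ := Abelian.Ext.contravariant_sequence_exact₁ (scOf_shortExact i p hi hp hip) Y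
    (Abelian.Ext.mk₀ (ModuleCat.ofHom g)) (add_zero 1) (h.elim _ _)
  obtain ⟨x, rfl⟩ := Abelian.Ext.homEquiv₀.symm.surjective x
  rw [Abelian.Ext.homEquiv₀_symm_apply, Abelian.Ext.mk₀_comp_mk₀] at hx
  have := Abelian.Ext.homEquiv₀.symm.injective hx
  exact ⟨x.hom, congrArg ModuleCat.Hom.hom this⟩

theorem ext_one_lift {K P E M : ModuleCat.{u} R} (i : K →ₗ[R] P) (p : P →ₗ[R] E)
    (hi : Function.Injective i) (hp : Function.Surjective p) (hip : Function.Exact i p)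
    (h : Subsingleton (Abelian.Ext.{u} M K 1)) (g : M →ₗ[R] E) :
    ∃ g' : M →ₗ[R] P, p ∘ₗ g' = g := by
  obtain ⟨x, hx⟩ := Abelian.Ext.covariant_sequence_exact₃ M (scOf_shortExact i p hi hp hip)
    (Abelian.Ext.mk₀ (ModuleCat.ofHom g)) (zero_add 1) (h.elim _ _)
  obtain ⟨x, rfl⟩ := Abelian.Ext.homEquiv₀.symm.surjective x
  rw [Abelian.Ext.homEquiv₀_symm_apply, Abelian.Ext.mk₀_comp_mk₀] at hx
  have := Abelian.Ext.homEquiv₀.symm.injective hx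
  exact ⟨x.hom, congrArg ModuleCat.Hom.hom this⟩

theorem ext_shift {W F N Y : ModuleCat.{u} R} (i : W →ₗ[R] F) (p : F →ₗ[R] N)
    (hi : Function.Injective i) (hp : Function.Surjective p) (hip : Function.Exact i p)
    (hF : Projective F) (j : ℕ)
    (h : Subsingleton (Abelian.Ext.{u} N Y (j+2))) : Subsingleton (Abelian.Ext.{u} W Y (j+1)) := by
  have key : ∀ a : Abelian.Ext.{u} W Y (j+1), a = 0 := by
    intro a
    obtain ⟨x, rfl⟩ := Abelian.Ext.contravariant_sequence_exact₁ (scOf_shortExact i p hi hp hip) Y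
      a (show 1 + (j+1) = j+2 by omega) (h.elim _ _)
    have : Projective (scOf i p hip).X₂ := hF
    rw [Abelian.Ext.eq_zero_of_projective x]
    simp
    rfl
  exact ⟨fun a b => by rw [key a, key b]⟩

theorem main_ind (hcoh : IsCoherentRing R) (E : ModuleCat.{u} R) [Module.Injective R E] (j : ℕ) :
    ∃ K : ModuleCat.{u} R,
      (∀ (W F N : ModuleCat.{u} R) (i : W →ₗ[R] F) (p : F →ₗ[R] N), Function.Injective i →
        Function.Surjective p → Function.Exact i p → Module.Projective R F → Module.Finite R F →
        Module.FinitePresentation R N →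
        Subsingleton (Abelian.Ext.{u} N (ModuleCat.of R R) (j+1)) →
        Function.Injective (i.rTensor K)) ∧
      (∀ d, HasProjectiveDimensionLT K (d+1) → HasProjectiveDimensionLT E (d+1+j)) := by
  have hW : ∀ (W F N : ModuleCat.{u} R) (i : W →ₗ[R] F) (p : F →ₗ[R] N), Function.Injective i →
        Function.Surjective p → Function.Exact i p → Module.Projective R F → Module.Finite R F →
        Module.FinitePresentation R N → Module.FinitePresentation R W := by
    intro W F N i p hi hp hip hF hF' hN
    have h1 := Module.FinitePresentation.fg_ker p hp
    rw [hip.linearMap_ker_eq, ← Module.Finite.iff_fg] at h1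
    have := Module.Finite.equiv (LinearEquiv.ofInjective i hi).symm
    obtain ⟨k, f, g, _, hg, _⟩ := Module.Finite.exists_comp_eq_id_of_projective R F
    exact fp_of_inj hcoh k W (g ∘ₗ i) (hg.comp hi)
  induction j with
  | zero =>
    refine ⟨E, ?_, fun d h => h⟩
    intro W F N i p hi hp hip hF hF' hN h
    have := hW W F N i p hi hp hip hF hF' hN
    exact tor_base E i (fun g => ext_one_extend (Y := ModuleCat.of R R) i p hi hp hip h g)
  | succ j ih =>
    obtain ⟨K, h1, h2⟩ := ih
    let q : (K →₀ R) →ₗ[R] K := Finsupp.linearCombination R id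
    have hq : Function.Surjective q := Finsupp.linearCombination_id_surjective R K
    have hjq : Function.Exact (LinearMap.ker q).subtype q := LinearMap.exact_subtype_ker_map q
    have hj := (LinearMap.ker q).subtype_injective
    refine ⟨ModuleCat.of R (LinearMap.ker q), ?_, ?_⟩
    · intro W F N i p hi hp hip hF hF' hN h
      have := hW W F N i p hi hp hip hF hF' hN
      have hPF : Projective F := (IsProjective.iff_projective (R := R) F).1 hF
      have hs := ext_shift i p hi hp hip hPF j h
      obtain ⟨k, r, hr⟩ := Module.Finite.exists_fin' R W
      have h3 := h1 (ModuleCat.of R (LinearMap.ker r)) (ModuleCat.of R (Fin k → R)) W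
        (LinearMap.ker r).subtype r (LinearMap.ker r).subtype_injective hr
        (LinearMap.exact_subtype_ker_map r) inferInstance inferInstance this hs
      have h4 := tor_swap (A := LinearMap.ker q) (L := K →₀ R) (E := K) (LinearMap.ker r).subtype r
        hr (LinearMap.exact_subtype_ker_map r) (LinearMap.ker q).subtype q hj hq hjq h3
      have h5 := Module.Flat.rTensor_preserves_injective_linearMap (M := K →₀ R) i hi
      have h6 := h5.comp h4
      rw [← LinearMap.coe_comp, LinearMap.rTensor_comp_lTensor,
        ← LinearMap.lTensor_comp_rTensor, LinearMap.coe_comp] at h6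
      exact h6.of_comp
    · intro d hd
      have hse := scOf_shortExact (W := ModuleCat.of R (LinearMap.ker q))
        (F := ModuleCat.of R (K →₀ R)) (N := K) (LinearMap.ker q).subtype q hj hq hjq
      have hP : Projective (ModuleCat.of R (K →₀ R)) :=
        (IsProjective.iff_projective (R := R) _).1 inferInstance
      have := (hse.hasProjectiveDimensionLT_X₃_iff d hP).2 hd
      have := h2 (d+1) this
      rwa [show d + 1 + (j + 1) = d + 1 + 1 + j by omega]
end
theorem stmt1 (R : Type u) [CommRing R] (n m : ℕ)
    (hcoh : IsCoherentRing R)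
    (hFC : ∀ (P : ModuleCat.{u} R), Module.FinitePresentation R P →
      ExtVanish R P (ModuleCat.of R R) (n + 1))
    (hperf : ∀ (F : ModuleCat.{u} R), Module.Flat R F → ProjDimLE R F m)
    (M : ModuleCat.{u} R)
    (hM : ∀ (Q : ModuleCat.{u} R), HasFinProjDim R Q →
      ∀ i : ℕ, 1 ≤ i → ExtVanish R M Q i) :
    ∃ (P : ModuleCat.{u} R) (f : M →ₗ[R] P),
      Module.Projective R P ∧ Function.Injective f := by
  have hEI := ModuleCat.enoughInjectives.{u, u} R
  let E := Injective.under M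
  have hE : Module.Injective R E :=
    @Module.injective_module_of_injective_object R E _ _ _
      (inferInstanceAs (Injective (Injective.under M)))
  have hι : Function.Injective (Injective.ι M).hom :=
    (ModuleCat.mono_iff_injective (Injective.ι M)).1 inferInstance
  obtain ⟨K, h1, h2⟩ := main_ind hcoh E n
  have hflat : Module.Flat R K := by
    rw [Module.Flat.iff_rTensor_injective]
    intro I hI
    have hfp : Module.FinitePresentation R (R ⧸ I) :=
      Module.finitePresentation_of_surjective I.mkQ I.mkQ_surjective
        (by rw [Submodule.ker_mkQ]; exact hI)
    exact h1 (ModuleCat.of R I) (ModuleCat.of R R) (ModuleCat.of R (R ⧸ I)) I.subtype I.mkQ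
      I.subtype_injective I.mkQ_surjective (LinearMap.exact_subtype_mkQ I) inferInstance
      inferInstance hfp ((extVanish_iff _ _ _ _).1 (hFC _ hfp))
  have hpd := h2 m ((projDimLE_iff R K m).1 (hperf K hflat))
  let q : (E →₀ R) →ₗ[R] E := Finsupp.linearCombination R id
  have hq : Function.Surjective q := Finsupp.linearCombination_id_surjective R E
  have hjq : Function.Exact (LinearMap.ker q).subtype q := LinearMap.exact_subtype_ker_map q
  have hj := (LinearMap.ker q).subtype_injective
  have hse := scOf_shortExact (W := ModuleCat.of R (LinearMap.ker q))
    (F := ModuleCat.of R (E →₀ R)) (N := E) (LinearMap.ker q).subtype q hj hq hjq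
  have hP : Projective (ModuleCat.of R (E →₀ R)) :=
    (IsProjective.iff_projective (R := R) _).1 inferInstance
  have hpd' : HasProjectiveDimensionLT E (m + n + 2) :=
    hasProjectiveDimensionLT_of_ge E (m + 1 + n) _ (by omega)
  have hK := (hse.hasProjectiveDimensionLT_X₃_iff (m + n) hP).1 hpd'
  have hv := (extVanish_iff _ _ _ _).1
    (hM _ ⟨m + n, (projDimLE_iff R _ _).2 hK⟩ 1 le_rfl)
  obtain ⟨g, hg⟩ := ext_one_lift (K := ModuleCat.of R (LinearMap.ker q))
    (P := ModuleCat.of R (E →₀ R)) (E := E) (LinearMap.ker q).subtype q hj hq hjq hv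
    (Injective.ι M).hom
  refine ⟨ModuleCat.of R (E →₀ R), g, inferInstanceAs (Module.Projective R (E →₀ R)), ?_⟩
  rw [← hg] at hι
  exact Function.Injective.of_comp (f := q) hι

end
end

section
/- Let R be a commutative coherent ring that is n-FC (Ext_R^{n+1}(P, R) = 0 for every finitely presented R-module P) and m-perfect (every flat R-module has projective dimension at most m), for some nonnegative integers n and m. If M is an R-module such that Ext_R^i(M, Q) = 0 for every integer i ≥ 1 and every R-module Q of finite projective dimension, then there exists a short exact sequence of R-modules 0 → M → P⁰ → G⁰ → 0 in which P⁰ is projective and Ext_R^i(G⁰, Q) = 0 for every integer i ≥ 1 and every R-module Q of finite projective dimension. -/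
open CategoryTheory

noncomputable section

universe u

/-- Vanishing of Ext, unbundled. -/
def EZ (R : Type u) [CommRing R] (A B : Type u) [AddCommGroup A] [Module R A]
    [AddCommGroup B] [Module R B] (i : ℕ) : Prop :=
  Subsingleton (Abelian.Ext.{u} (ModuleCat.of R A) (ModuleCat.of R B) i)

open Abelian in
theorem extVanish_iff_s2 (R : Type u) [CommRing R] (M N : ModuleCat.{u} R) (i : ℕ) :
    ExtVanish R M N (i + 1) ↔ EZ R M N (i + 1) := by
  let P : ProjectiveResolution M := Classical.choice (HasProjectiveResolution.out)
  have h1 : ExtVanish R M N (i + 1) ↔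
      ∀ f : P.complex.X (i + 1) ⟶ N, P.complex.d (i + 2) (i + 1) ≫ f = 0 →
        ∃ g : P.complex.X i ⟶ N, P.complex.d (i + 1) i ≫ g = f := by
    unfold ExtVanish extGroup
    rw [← ModuleCat.isZero_iff_subsingleton, (P.isoExt (R := R) (i + 1) N).isZero_iff,
      ← HomologicalComplex.exactAt_iff_isZero_homology,
      HomologicalComplex.exactAt_iff' _ i (i + 1) (i + 2) (by simp) (by simp),
      ShortComplex.moduleCat_exact_iff]
    rfl
  have h2 : EZ R M N (i + 1) ↔
      ∀ f : P.complex.X (i + 1) ⟶ N, P.complex.d (i + 2) (i + 1) ≫ f = 0 →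
        ∃ g : P.complex.X i ⟶ N, P.complex.d (i + 1) i ≫ g = f := by
    unfold EZ
    constructor
    · intro h f hf
      exact (P.extMk_eq_zero_iff f (i + 2) rfl hf i rfl).1 (h.elim _ _)
    · intro h
      refine subsingleton_of_forall_eq 0 fun x => ?_
      obtain ⟨f, hf, rfl⟩ := P.extMk_surjective x (i + 2) rfl
      exact (P.extMk_eq_zero_iff f (i + 2) rfl hf i rfl).2 (h f hf)
  rw [h1, h2]

section api
variable {R : Type u} [CommRing R] {A B C X : Type u} [AddCommGroup A] [Module R A]
  [AddCommGroup B] [Module R B] [AddCommGroup C] [Module R C] [AddCommGroup X] [Module R X]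

/-- Short exact sequence. -/
structure SES (f : A →ₗ[R] B) (g : B →ₗ[R] C) : Prop where
  inj : Function.Injective f
  surj : Function.Surjective g
  ex : Function.Exact f g

/-- Associated short complex. -/
abbrev SES.S {f : A →ₗ[R] B} {g : B →ₗ[R] C} (h : SES f g) : ShortComplex (ModuleCat.{u} R) :=
  ShortComplex.mk (ModuleCat.ofHom f) (ModuleCat.ofHom g)
    (by rw [← ModuleCat.ofHom_comp, h.ex.linearMap_comp_eq_zero]; rfl)

theorem SES.se {f : A →ₗ[R] B} {g : B →ₗ[R] C} (h : SES f g) : h.S.ShortExact :=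
  ModuleCat.shortComplex_shortExact _ h.ex h.inj h.surj

variable {f : A →ₗ[R] B} {g : B →ₗ[R] C}

open Abelian

theorem SES.cov1 (h : SES f g) {i : ℕ} (hB : EZ R X B (i + 1)) (hC : EZ R X C i) :
    EZ R X A (i + 1) := by
  refine subsingleton_of_forall_eq 0 fun x => ?_
  obtain ⟨y, rfl⟩ := Ext.covariant_sequence_exact₁ _ h.se x (hB.elim _ _) rfl
  rw [hC.elim y 0, Ext.zero_comp]

theorem SES.cov2 (h : SES f g) {i : ℕ} (hB : EZ R X A i) (hC : EZ R X C i) :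
    EZ R X B i := by
  refine subsingleton_of_forall_eq 0 fun x => ?_
  obtain ⟨y, rfl⟩ := Ext.covariant_sequence_exact₂ _ h.se x (hC.elim _ _)
  rw [hB.elim y 0, Ext.zero_comp]

theorem SES.cov3 (h : SES f g) {i : ℕ} (hB : EZ R X B i) (hA : EZ R X A (i + 1)) :
    EZ R X C i := by
  refine subsingleton_of_forall_eq 0 fun x => ?_
  obtain ⟨y, rfl⟩ := Ext.covariant_sequence_exact₃ _ h.se x rfl (hA.elim _ _)
  rw [hB.elim y 0, Ext.zero_comp]

theorem SES.con1 (h : SES f g) {i : ℕ} (hB : EZ R B X i) (hC : EZ R C X (i + 1)) :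
    EZ R A X i := by
  refine subsingleton_of_forall_eq 0 fun x => ?_
  obtain ⟨y, rfl⟩ := Ext.contravariant_sequence_exact₁ h.se _ x (add_comm _ _) (hC.elim _ _)
  rw [hB.elim y 0, Ext.comp_zero]

theorem SES.con2 (h : SES f g) {i : ℕ} (hA : EZ R A X i) (hC : EZ R C X i) :
    EZ R B X i := by
  refine subsingleton_of_forall_eq 0 fun x => ?_
  obtain ⟨y, rfl⟩ := Ext.contravariant_sequence_exact₂ h.se _ x (hA.elim _ _)
  rw [hC.elim y 0, Ext.comp_zero]

theorem SES.con3 (h : SES f g) {i : ℕ} (hA : EZ R A X i) (hB : EZ R B X (i + 1)) :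
    EZ R C X (i + 1) := by
  refine subsingleton_of_forall_eq 0 fun x => ?_
  obtain ⟨y, rfl⟩ := Ext.contravariant_sequence_exact₃ h.se _ x (hB.elim _ _) (add_comm _ _)
  rw [hA.elim y 0, Ext.comp_zero]

theorem SES.extend (h : SES f g) (hC : EZ R C X 1) (φ : A →ₗ[R] X) :
    ∃ ψ : B →ₗ[R] X, ψ ∘ₗ f = φ := by
  obtain ⟨y, hy⟩ := Ext.contravariant_sequence_exact₁ h.se _ (Ext.mk₀ (ModuleCat.ofHom φ))
    (add_comm _ _) (hC.elim _ _)
  obtain ⟨y, rfl⟩ := Ext.mk₀_bijective _ _ |>.2 y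
  rw [Ext.mk₀_comp_mk₀] at hy
  have := (Ext.mk₀_bijective _ _ |>.1 hy)
  refine ⟨y.hom, ?_⟩
  have := congrArg ModuleCat.Hom.hom this
  simpa using this

theorem SES.lift (h : SES f g) (hA : EZ R X A 1) (φ : X →ₗ[R] C) :
    ∃ ψ : X →ₗ[R] B, g ∘ₗ ψ = φ := by
  obtain ⟨y, hy⟩ := Ext.covariant_sequence_exact₃ _ h.se (Ext.mk₀ (ModuleCat.ofHom φ)) 
    (zero_add _) (hA.elim _ _)
  obtain ⟨y, rfl⟩ := Ext.mk₀_bijective _ _ |>.2 y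
  rw [Ext.mk₀_comp_mk₀] at hy
  have := (Ext.mk₀_bijective _ _ |>.1 hy)
  refine ⟨y.hom, ?_⟩
  have := congrArg ModuleCat.Hom.hom this
  simpa using this

theorem SES.of_extend (h : SES f g) (hB : EZ R B X 1)
    (H : ∀ φ : A →ₗ[R] X, ∃ ψ : B →ₗ[R] X, ψ ∘ₗ f = φ) : EZ R C X 1 := by
  refine subsingleton_of_forall_eq 0 fun x => ?_
  obtain ⟨y, rfl⟩ := Ext.contravariant_sequence_exact₃ h.se _ x (hB.elim _ _) (add_zero _)
  obtain ⟨y, rfl⟩ := Ext.mk₀_bijective _ _ |>.2 y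
  obtain ⟨ψ, hψ⟩ := H y.hom
  have : y = h.S.f ≫ ModuleCat.ofHom ψ := by
    ext1; simpa using hψ.symm
  rw [this, ← Ext.mk₀_comp_mk₀, ← Ext.comp_assoc (a₁₂ := 1) (a₂₃ := 0) _ _ _ (by simp) (by simp) (by simp),
    h.se.extClass_comp, Ext.zero_comp]

theorem EZ.retract {i : ℕ} (hB : EZ R X B i) (f : A →ₗ[R] B) (r : B →ₗ[R] A)
    (h : r ∘ₗ f = LinearMap.id) : EZ R X A i := by
  refine subsingleton_of_forall_eq 0 fun x => ?_
  have h2 : ModuleCat.ofHom f ≫ ModuleCat.ofHom r = 𝟙 _ := by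
    rw [← ModuleCat.ofHom_comp, h]; rfl
  have : (x.comp (Ext.mk₀ (ModuleCat.ofHom f)) (add_zero i)).comp
      (Ext.mk₀ (ModuleCat.ofHom r)) (add_zero i) = x := by
    rw [Ext.comp_assoc_of_third_deg_zero, Ext.mk₀_comp_mk₀, h2, Ext.comp_mk₀_id]
  rw [← this, hB.elim (x.comp _ _) 0, Ext.zero_comp]

theorem EZ.proj [Module.Projective R A] (i : ℕ) : EZ R A X (i + 1) := by
  have : Projective (ModuleCat.of R A) := (IsProjective.iff_projective A).1 inferInstance
  exact Ext.subsingleton_of_projective _ _ _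

theorem EZ.inj (hA : Module.Injective R A) (i : ℕ) : EZ R X A (i + 1) := by
  have : Injective (ModuleCat.of R A) := Module.injective_object_of_injective_module R A
  exact Ext.subsingleton_of_injective _ _ _

theorem EZ.flip_SES_ker {g : B →ₗ[R] C} (hg : Function.Surjective g) :
    SES (LinearMap.ker g).subtype g :=
  ⟨Subtype.val_injective, hg, LinearMap.exact_subtype_ker_map g⟩

theorem SES.ofQuot {f : A →ₗ[R] B} (hf : Function.Injective f) :
    SES f (LinearMap.range f).mkQ :=
  ⟨hf, Submodule.mkQ_surjective _, LinearMap.exact_map_mkQ_range f⟩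

theorem projective_of_EZ (h : ∀ (Y : Type u) [AddCommGroup Y] [Module R Y], EZ R A Y 1) :
    Module.Projective R A := by
  have := (projective_iff_subsingleton_ext_one (X := ModuleCat.of R A)).2 (fun {Y} => h Y)
  exact (IsProjective.iff_projective A).2 this

theorem injective_of_EZ (h : ∀ (Y : Type u) [AddCommGroup Y] [Module R Y], EZ R Y A 1) :
    Module.Injective R A := by
  have := (injective_iff_subsingleton_ext_one (X := ModuleCat.of R A)).2 (fun {Y} => h Y)
  exact Module.injective_module_of_injective_object R A

end api

section partb
variable {R : Type u} [CommRing R]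

theorem fp_of_equiv' {A B : Type u} [AddCommGroup A] [Module R A] [AddCommGroup B] [Module R B]
    (e : A ≃ₗ[R] B) (h : Module.FinitePresentation R A) : Module.FinitePresentation R B :=
  Module.FinitePresentation.of_equiv e

theorem fp_of_inj_s2 {A B : Type u} [AddCommGroup A] [Module R A] [AddCommGroup B] [Module R B]
    (q : A →ₗ[R] B) (hq : Function.Injective q) (hA : Module.Finite R A)
    (h : ∀ N : Submodule R B, N.FG → Module.FinitePresentation R N) :
    Module.FinitePresentation R A := by
  have h1 : Module.FinitePresentation R (LinearMap.range q) :=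
    h _ (Module.Finite.iff_fg.1 (Module.Finite.range q))
  let e : LinearMap.range q ≃ₗ[R] A := (LinearEquiv.ofInjective q hq).symm
  exact @fp_of_equiv' R _ (LinearMap.range q) A _ _ _ _ e h1

theorem fp_step (hcoh : IsCoherentRing R) {A B : Type u} [AddCommGroup A] [Module R A]
    [AddCommGroup B] [Module R B] (hA : Module.Finite R A) (p : A →ₗ[R] R) (q : A →ₗ[R] B)
    (hpq : ∀ x, p x = 0 → q x = 0 → x = 0)
    (h : ∀ N : Submodule R B, N.FG → Module.FinitePresentation R N) :
    Module.FinitePresentation R A := by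
  have hJfp : Module.FinitePresentation R (LinearMap.range p) :=
    hcoh _ (Module.Finite.iff_fg.1 (Module.Finite.range p))
  have hker : (LinearMap.ker p.rangeRestrict).FG :=
    Module.FinitePresentation.fg_ker p.rangeRestrict p.surjective_rangeRestrict
  have hfin : Module.Finite R (LinearMap.ker p.rangeRestrict) := Module.Finite.of_fg hker
  have hq : Function.Injective (q ∘ₗ (LinearMap.ker p.rangeRestrict).subtype) := by
    rw [injective_iff_map_eq_zero]
    intro x hx
    have := congrArg Subtype.val (LinearMap.mem_ker.1 x.2)
    exact Subtype.ext (hpq x.1 this hx)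
  have hfp2 : Module.FinitePresentation R (LinearMap.ker p.rangeRestrict) :=
    fp_of_inj_s2 (q ∘ₗ (LinearMap.ker p.rangeRestrict).subtype) hq hfin h
  exact Module.finitePresentation_of_ker p.rangeRestrict p.surjective_rangeRestrict

theorem coh_fg_fp (hcoh : IsCoherentRing R) : ∀ (k : ℕ) (N : Submodule R (Fin k → R)), N.FG →
    Module.FinitePresentation R N := by
  intro k
  induction k with
  | zero => intro N _; infer_instance
  | succ k ih =>
    intro N hN
    refine fp_step hcoh (Module.Finite.of_fg hN) ((LinearMap.proj 0) ∘ₗ N.subtype)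
      ((LinearMap.funLeft R R Fin.succ) ∘ₗ N.subtype) (fun x hx hy => ?_) ih
    refine Subtype.ext (funext fun i => ?_)
    refine Fin.cases ?_ (fun j => ?_) i
    · exact hx
    · exact congrFun hy j

theorem fp_cover (hcoh : IsCoherentRing R) (P : Type u) [AddCommGroup P] [Module R P]
    [Module.FinitePresentation R P] : ∃ (k : ℕ) (g : (Fin k → R) →ₗ[R] P),
      Function.Surjective g ∧ Module.FinitePresentation R (LinearMap.ker g) := by
  obtain ⟨k, g, hg⟩ := Module.Finite.exists_fin' R P
  exact ⟨k, g, hg, coh_fg_fp hcoh k _ (Module.FinitePresentation.fg_ker g hg)⟩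

theorem EZ_fp_flat (hcoh : IsCoherentRing R) (D : Type u) [AddCommGroup D] [Module R D]
    [Module.Flat R D] : ∀ (i : ℕ) (P : Type u) [AddCommGroup P] [Module R P]
    [Module.FinitePresentation R P], EZ R P R (i + 1) → EZ R P D (i + 1) := by
  intro i
  induction i with
  | zero =>
    intro P _ _ _ h
    obtain ⟨k, g, hg, hfp⟩ := fp_cover hcoh P
    have hs := EZ.flip_SES_ker hg
    refine hs.of_extend (EZ.proj _) fun φ => ?_
    obtain ⟨l, a, b, rfl⟩ := Module.Flat.exists_factorization_of_finitePresentation φ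
    choose ψ hψ using fun j : Fin l => hs.extend h (Finsupp.lapply j ∘ₗ a)
    refine ⟨b ∘ₗ (Finsupp.linearEquivFunOnFinite R R (Fin l)).symm.toLinearMap ∘ₗ
      LinearMap.pi ψ, ?_⟩
    ext x
    simp only [LinearMap.comp_apply]
    congr 1
    ext j
    exact LinearMap.congr_fun (hψ j) x
  | succ i ih =>
    intro P _ _ _ h
    obtain ⟨k, g, hg, hfp⟩ := fp_cover hcoh P
    have hs := EZ.flip_SES_ker hg
    exact hs.con3 (ih _ (hs.con1 (EZ.proj _) h)) (EZ.proj _)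

theorem SES.dual {A B C : Type u} [AddCommGroup A] [Module R A]
    [AddCommGroup B] [Module R B] [AddCommGroup C] [Module R C] {f : A →ₗ[R] B} {g : B →ₗ[R] C}
    (h : SES f g) : SES (CharacterModule.dual g) (CharacterModule.dual f) := by
  refine ⟨CharacterModule.dual_injective_of_surjective g h.surj,
    CharacterModule.dual_surjective_of_injective f h.inj, fun c => ⟨fun hc => ?_, ?_⟩⟩
  · have hk : g.toAddMonoidHom.ker ≤ AddMonoidHom.ker c := by
      intro b hb
      obtain ⟨a, rfl⟩ := (h.ex b).1 hb
      exact DFunLike.congr_fun hc a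
    refine ⟨(AddMonoidHom.liftOfSurjective g.toAddMonoidHom h.surj ⟨c, hk⟩ : C →+ _), ?_⟩
    ext b
    exact AddMonoidHom.liftOfRightInverse_comp_apply _ _ (Function.rightInverse_surjInv h.surj)
      ⟨c, hk⟩ b
  · rintro ⟨d, rfl⟩
    ext a
    have : g (f a) = 0 := (h.ex _).2 ⟨a, rfl⟩
    change d (g (f a)) = 0
    rw [this, map_zero]

/-- flip of a map into a character module. -/
def cflip {A B : Type u} [AddCommGroup A] [Module R A] [AddCommGroup B] [Module R B]
    (φ : A →ₗ[R] CharacterModule B) : B →ₗ[R] CharacterModule A where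
  toFun b := AddMonoidHom.mk' (fun a => φ a b) (fun a a' => by rw [map_add]; rfl)
  map_add' b b' := by ext a; exact map_add (φ a) b b'
  map_smul' r b := by
    ext a
    change φ a (r • b) = φ (r • a) b
    rw [LinearMap.map_smul]; rfl

theorem dual_injective_of_flat (F : Type u) [AddCommGroup F] [Module R F] [Module.Flat R F] :
    Module.Injective R (CharacterModule F) := Module.Flat.iff_characterModule_injective.1 ‹_›

theorem free_cover (A : Type u) [AddCommGroup A] [Module R A] :
    ∃ g : (A →₀ R) →ₗ[R] A, Function.Surjective g :=
  ⟨Finsupp.linearCombination R id, Finsupp.linearCombination_id_surjective R A⟩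

theorem EZ_flat_dual (A : Type u) [AddCommGroup A] [Module R A] [Module.Flat R A] :
    ∀ (j : ℕ) (I : Type u) [AddCommGroup I] [Module R I], EZ R A (CharacterModule I) (j + 1) := by
  intro j
  induction j with
  | zero =>
    intro I _ _
    obtain ⟨g, hg⟩ := free_cover (R := R) A
    have hs := EZ.flip_SES_ker hg
    refine hs.of_extend (EZ.proj _) fun φ => ?_
    obtain ⟨ψ, hψ⟩ := hs.dual.lift (EZ.inj (dual_injective_of_flat A) 0) (cflip φ)
    refine ⟨cflip ψ, ?_⟩
    ext x i
    exact DFunLike.congr_fun (LinearMap.congr_fun hψ i) x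
  | succ j ih =>
    intro I _ _
    obtain ⟨g, hg⟩ := free_cover (R := R) I
    have hs := (EZ.flip_SES_ker hg).dual
    exact hs.cov1 (EZ.inj (dual_injective_of_flat _) _) (ih _)

theorem flat_of_EZ (X : Type u) [AddCommGroup X] [Module R X]
    (h : ∀ (P : Type u) [AddCommGroup P] [Module R P] [Module.FinitePresentation R P],
      EZ R P (CharacterModule X) 1) : Module.Flat R X := by
  rw [Module.Flat.iff_rTensor_injective]
  intro J hJ
  rw [rTensor_injective_iff_lcomp_surjective]
  have hfp : Module.FinitePresentation R (R ⧸ J) :=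
    Module.finitePresentation_of_surjective J.mkQ J.mkQ_surjective (by rw [Submodule.ker_mkQ]; exact hJ)
  intro φ
  have hs : SES (R := R) J.subtype J.mkQ :=
    ⟨Subtype.val_injective, J.mkQ_surjective, LinearMap.exact_subtype_mkQ J⟩
  exact hs.extend (h _) φ

/-- Projective dimension at most d. -/
def PD (R : Type u) [CommRing R] (A : Type u) [AddCommGroup A] [Module R A] (d : ℕ) : Prop :=
  ∀ (Y : Type u) [AddCommGroup Y] [Module R Y] (j : ℕ), d < j → EZ R A Y j

theorem fd_bound {m : ℕ}
    (hperf : ∀ (F : Type u) [AddCommGroup F] [Module R F] [Module.Flat R F], PD R F m) :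
    ∀ (k : ℕ) (X : Type u) [AddCommGroup X] [Module R X],
    (∀ (P : Type u) [AddCommGroup P] [Module R P] [Module.FinitePresentation R P],
      EZ R P (CharacterModule X) (k + 1)) → PD R X (k + m) ∧
      ∀ (G : Type u) [AddCommGroup G] [Module R G] (j : ℕ), k < j →
        EZ R G (CharacterModule X) j := by
  intro k
  induction k with
  | zero =>
    intro X _ _ h
    have := flat_of_EZ X h
    refine ⟨by rw [zero_add]; exact hperf X, fun G _ _ j hj => ?_⟩
    obtain ⟨j, rfl⟩ := Nat.exists_eq_add_of_lt hj
    exact EZ.inj (dual_injective_of_flat X) _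
  | succ k ih =>
    intro X _ _ h
    obtain ⟨g, hg⟩ := free_cover (R := R) X
    have hs := EZ.flip_SES_ker hg
    obtain ⟨h1, h2⟩ := ih (LinearMap.ker g) (fun P _ _ _ =>
      hs.dual.cov3 (EZ.inj (dual_injective_of_flat _) _) (h P))
    constructor
    · intro Y _ _ j hj
      obtain ⟨j, rfl⟩ := Nat.exists_eq_add_of_lt hj
      exact hs.con3 (h1 _ _ (by omega)) (EZ.proj _)
    · intro G _ _ j hj
      obtain ⟨j, rfl⟩ := Nat.exists_eq_add_of_lt hj
      exact hs.dual.cov1 (EZ.inj (dual_injective_of_flat _) _) (h2 _ _ (by omega))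

/-- evaluation map. -/
def cev (F : Type u) [AddCommGroup F] [Module R F] :
    F →ₗ[R] CharacterModule (CharacterModule F) := cflip LinearMap.id

theorem cev_injective (F : Type u) [AddCommGroup F] [Module R F] :
    Function.Injective (cev (R := R) F) := by
  rw [injective_iff_map_eq_zero]
  intro a ha
  exact CharacterModule.eq_zero_of_character_apply fun c => DFunLike.congr_fun ha c

theorem flat_coker (F : Type u) [AddCommGroup F] [Module R F]
    [Module.Flat R (CharacterModule (CharacterModule F))] :
    Module.Flat R (CharacterModule (CharacterModule F) ⧸ LinearMap.range (cev (R := R) F)) := by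
  rw [Module.Flat.iff_characterModule_injective]
  have hs := (SES.ofQuot (cev_injective (R := R) F)).dual
  refine injective_of_EZ fun Y _ _ => ?_
  have hsec : CharacterModule.dual (cev (R := R) F) ∘ₗ cev (CharacterModule F) =
      LinearMap.id := by
    ext c x; rfl
  have hsp := hs.ex.split_tfae hs.inj hs.surj
  have hsp2 := hsp.out 0 1
  obtain ⟨r, hr⟩ := hsp2.1 ⟨_, hsec⟩
  exact (EZ.inj (dual_injective_of_flat _) 0).retract _ r hr

end partb

section partc
variable {R : Type u} [CommRing R]

theorem desc_exists {P M W : Type u} [AddCommGroup P] [Module R P] [AddCommGroup M] [Module R M]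
    [AddCommGroup W] [Module R W] (σ : P →ₗ[R] M) (hσ : Function.Surjective σ) (h : P →ₗ[R] W)
    (hk : ∀ p, σ p = 0 → h p = 0) : ∃ h' : M →ₗ[R] W, ∀ p, h' (σ p) = h p := by
  refine ⟨((LinearMap.ker σ).liftQ h hk) ∘ₗ
    (σ.quotKerEquivOfSurjective hσ).symm.toLinearMap, fun p => ?_⟩
  have : (σ.quotKerEquivOfSurjective hσ).symm (σ p) = (LinearMap.ker σ).mkQ p := by
    rw [LinearEquiv.symm_apply_eq]; rfl
  change ((LinearMap.ker σ).liftQ h hk) ((σ.quotKerEquivOfSurjective hσ).symm (σ p)) = h p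
  rw [this]; rfl

theorem modinj_of_inj (E : ModuleCat.{u} R) (h : Injective E) : Module.Injective R E :=
  Module.injective_module_of_injective_object (inj := h) R E

theorem flat_dual_of_injective (hcoh : IsCoherentRing R) (I : Type u) [AddCommGroup I] [Module R I]
    (hI : Module.Injective R I) : Module.Flat R (CharacterModule I) := by
  rw [Module.Flat.iff_forall_isTrivialRelation]
  intro l f x hx
  let φ : (Fin l → R) →ₗ[R] R := Fintype.linearCombination R f
  have hJfp : Module.FinitePresentation R (LinearMap.range φ) :=
    hcoh _ (Module.Finite.iff_fg.1 (Module.Finite.range φ))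
  have hker : (LinearMap.ker φ.rangeRestrict).FG :=
    Module.FinitePresentation.fg_ker φ.rangeRestrict φ.surjective_rangeRestrict
  obtain ⟨k, s, hs⟩ := Submodule.fg_iff_exists_fin_generating_family.1 hker
  have hs0 : ∀ j, φ (s j) = 0 := by
    intro j
    have : s j ∈ LinearMap.ker φ.rangeRestrict := hs ▸ Submodule.subset_span ⟨j, rfl⟩
    exact congrArg Subtype.val (LinearMap.mem_ker.1 this)
  let β : (Fin l → I) →ₗ[R] (Fin k → I) :=
    LinearMap.pi fun j => ∑ i, s j i • LinearMap.proj i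
  have hβ : ∀ w j, β w j = ∑ i, s j i • w i := by
    intro w j; simp [β]
  have hα : ∀ w, β w = 0 → ∃ z : I, ∀ i, w i = f i • z := by
    intro w hw
    let h : (Fin l → R) →ₗ[R] I := Fintype.linearCombination R w
    have hk : LinearMap.ker φ.rangeRestrict ≤ LinearMap.ker h := by
      rw [← hs, Submodule.span_le]
      rintro _ ⟨j, rfl⟩
      have := congrFun hw j
      rw [hβ] at this
      simpa [h, Fintype.linearCombination_apply] using this
    obtain ⟨h', hh'⟩ := desc_exists φ.rangeRestrict φ.surjective_rangeRestrict h
      (fun p hp => hk hp)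
    obtain ⟨H, hH⟩ := hI.out (LinearMap.range φ).subtype Subtype.val_injective h'
    refine ⟨H 1, fun i => ?_⟩
    have h1 : φ (Pi.single i 1) = f i := by
      simp [φ]
    have h2 : h (Pi.single i 1) = w i := by
      simp [h]
    have h3 := hH (φ.rangeRestrict (Pi.single i 1))
    rw [hh', h2] at h3
    rw [← h3, ← map_smul, smul_eq_mul, mul_one, ← h1]
    rfl
  let ξ : CharacterModule (Fin l → I) :=
    AddMonoidHom.mk' (fun w => ∑ i, x i (w i)) (fun w w' => by
      rw [← Finset.sum_add_distrib]
      exact Finset.sum_congr rfl fun i _ => map_add (x i) _ _)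
  have hξ : ∀ w, β w = 0 → ξ w = 0 := by
    intro w hw
    obtain ⟨z, hz⟩ := hα w hw
    have h0 := DFunLike.congr_fun hx z
    have h1 : (∑ i, f i • x i) z = ∑ i, x i (f i • z) := by
      have := map_sum (AddMonoidHom.eval z : (I →+ AddCircle (1:ℚ)) →+ _)
        (fun i => f i • x i) Finset.univ
      exact this
    rw [h1] at h0
    change ∑ i, x i (w i) = 0
    simp_rw [hz]
    exact h0
  have hd := (EZ.flip_SES_ker β.surjective_rangeRestrict).dual
  obtain ⟨d, hd⟩ := (hd.ex ξ).1 (by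
    ext w
    exact hξ w.1 (congrArg Subtype.val (LinearMap.mem_ker.1 w.2)))
  obtain ⟨η, hη⟩ := CharacterModule.dual_surjective_of_injective (LinearMap.range β).subtype
    Subtype.val_injective d
  have hfin : ∀ w, ξ w = η (β w) := by
    intro w
    rw [← hd, ← hη]; rfl
  refine ⟨k, fun i j => s j i, fun j => CharacterModule.dual (LinearMap.single R (fun _ => I) j) η,
    fun i => ?_, fun j => ?_⟩
  · ext z
    have e1 : x i z = ξ (Pi.single i z) := by
      change _ = ∑ i', x i' ((Pi.single i z : Fin l → I) i')
      rw [Finset.sum_eq_single i]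
      · simp
      · intro b _ hb
        rw [Pi.single_eq_of_ne hb, map_zero]
      · simp
    have e2 : β (Pi.single i z) = ∑ j, Pi.single j (s j i • z) := by
      rw [Finset.univ_sum_single (fun j => s j i • z)]
      ext j
      rw [hβ, Finset.sum_eq_single i]
      · simp
      · intro b _ hb
        rw [Pi.single_eq_of_ne hb, smul_zero]
      · simp
    rw [e1, hfin, e2, map_sum]
    have := map_sum (AddMonoidHom.eval z : (I →+ AddCircle (1:ℚ)) →+ _)
        (fun j => s j i • CharacterModule.dual (LinearMap.single R (fun _ => I) j) η) Finset.univ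
    exact this.symm
  · have := hs0 j
    simp only [φ, Fintype.linearCombination_apply, smul_eq_mul] at this
    rw [← this]
    exact Finset.sum_congr rfl fun i _ => mul_comm _ _

/-- bounded injective dimension of flat modules. -/
theorem id_flat (hcoh : IsCoherentRing R) {n : ℕ}
    (hinj : ∀ (I : Type u) [AddCommGroup I] [Module R I], Module.Injective R I →
      ∀ (G : Type u) [AddCommGroup G] [Module R G] (j : ℕ), n < j →
        EZ R G (CharacterModule I) j) :
    ∀ (d : ℕ) (F : Type u) [AddCommGroup F] [Module R F] [Module.Flat R F],
      (∀ (X : Type u) [AddCommGroup X] [Module R X] [Module.Flat R X] (j : ℕ), d < j →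
        EZ R X F j) →
      ∀ (G : Type u) [AddCommGroup G] [Module R G] (j : ℕ), n + d < j → EZ R G F j := by
  intro d
  induction d with
  | zero =>
    intro F _ _ _ hF G _ _ j hj
    have hi := dual_injective_of_flat (R := R) F
    have := flat_dual_of_injective hcoh _ hi
    have := flat_coker (R := R) F
    have hs := SES.ofQuot (cev_injective (R := R) F)
    obtain ⟨r, hr⟩ := hs.extend (hF _ 1 one_pos) LinearMap.id
    exact (hinj _ hi G j hj).retract _ r hr
  | succ d ih =>
    intro F _ _ _ hF G _ _ j hj
    have hi := dual_injective_of_flat (R := R) F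
    have := flat_dual_of_injective hcoh _ hi
    have := flat_coker (R := R) F
    have hs := SES.ofQuot (cev_injective (R := R) F)
    obtain ⟨j, rfl⟩ := Nat.exists_eq_add_of_lt hj
    refine hs.cov1 (hinj _ hi G _ (by omega)) (ih _ ?_ G _ (by omega))
    intro X _ _ _ j hj
    obtain ⟨j, rfl⟩ := Nat.exists_eq_add_of_lt hj
    exact hs.cov3 (EZ_flat_dual X _ _) (hF X _ (by omega))

theorem id_finpd {N : ℕ}
    (hN : ∀ (F : Type u) [AddCommGroup F] [Module R F] [Module.Flat R F]
      (G : Type u) [AddCommGroup G] [Module R G] (j : ℕ), N < j → EZ R G F j) :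
    ∀ (d : ℕ) (Q : Type u) [AddCommGroup Q] [Module R Q], PD R Q d →
      ∀ (G : Type u) [AddCommGroup G] [Module R G] (j : ℕ), N < j → EZ R G Q j := by
  intro d
  induction d with
  | zero =>
    intro Q _ _ hQ G _ _ j hj
    have : Module.Projective R Q := projective_of_EZ fun Y _ _ => hQ Y 1 one_pos
    exact hN Q G j hj
  | succ d ih =>
    intro Q _ _ hQ G _ _ j hj
    obtain ⟨g, hg⟩ := free_cover (R := R) Q
    have hs := EZ.flip_SES_ker hg
    refine hs.cov3 (hN _ G j hj) (ih _ ?_ G _ (by omega))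
    intro Y _ _ j hj
    obtain ⟨j, rfl⟩ := Nat.exists_eq_add_of_lt hj
    exact hs.con1 (EZ.proj _) (hQ Y _ (by omega))

/-- being a `k`-th syzygy. -/
def IsSyz (R : Type u) [CommRing R] : ℕ → ModuleCat.{u} R → Prop
  | 0, _ => True
  | k + 1, L => ∃ (P L' : ModuleCat.{u} R) (f : L →ₗ[R] P) (g : P →ₗ[R] L'),
      Module.Projective R P ∧ SES f g ∧ IsSyz R k L'

theorem syz_EZ {N : ℕ} (Q : Type u) [AddCommGroup Q] [Module R Q]
    (hQ : ∀ (G : Type u) [AddCommGroup G] [Module R G] (j : ℕ), N < j → EZ R G Q j) :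
    ∀ (k : ℕ) (L : ModuleCat.{u} R), IsSyz R k L → ∀ i, N < i + 1 + k → EZ R L Q (i + 1) := by
  intro k
  induction k with
  | zero => intro L _ i hi; exact hQ L _ hi
  | succ k ih =>
    rintro L ⟨P, L', f, g, hP, hs, hL'⟩ i hi
    exact hs.con1 (EZ.proj _) (ih L' hL' _ (by omega))

theorem syz_embed {N : ℕ}
    (hN : ∀ (I : Type u) [AddCommGroup I] [Module R I], Module.Injective R I → PD R I N) :
    ∀ (k d : ℕ), k + d = N → ∀ (L : ModuleCat.{u} R), IsSyz R k L →
      ∃ (V L' : ModuleCat.{u} R) (f : L →ₗ[R] V) (g : V →ₗ[R] L'),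
        PD R V d ∧ SES f g ∧ IsSyz R k L' := by
  intro k
  induction k with
  | zero =>
    intro d hd L _
    let E := Injective.under L
    have hE : Module.Injective R E := modinj_of_inj E (Injective.injective_under L)
    let f : L →ₗ[R] E := (Injective.ι L).hom
    have hf : Function.Injective f := (ModuleCat.mono_iff_injective (Injective.ι L)).1 inferInstance
    have hd' : d = N := by omega
    exact ⟨E, ModuleCat.of R (E ⧸ LinearMap.range f), f, _, hd' ▸ hN E hE, SES.ofQuot hf, trivial⟩
  | succ k ih =>
    rintro d hd L ⟨P, L1, a, b, hP, hs, hL1⟩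
    obtain ⟨V1, L1', c, e, hV1, hs1, hL1'⟩ := ih (d + 1) (by omega) L1 hL1
    obtain ⟨π, hπ⟩ := free_cover (R := R) L1'
    obtain ⟨ψ, hψ⟩ := Module.projective_lifting_property e π hs1.surj
    let T : (P × (L1' →₀ R)) →ₗ[R] V1 := (c ∘ₗ b).coprod ψ
    have hT : ∀ p q, T (p, q) = c (b p) + ψ q := fun p q => by simp [T]
    have heψ : ∀ q, e (ψ q) = π q := fun q => LinearMap.congr_fun hψ q
    have hec : ∀ x, e (c x) = 0 := fun x => (hs1.ex _).2 ⟨x, rfl⟩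
    have hba : ∀ x, b (a x) = 0 := fun x => (hs.ex _).2 ⟨x, rfl⟩
    have hTs : Function.Surjective T := by
      intro v
      obtain ⟨q, hq⟩ := hπ (e v)
      obtain ⟨x, hx⟩ := (hs1.ex (v - ψ q)).1 (by rw [map_sub, heψ, hq, sub_self])
      obtain ⟨p, rfl⟩ := hs.surj x
      exact ⟨(p, q), by rw [hT, hx, sub_add_cancel]⟩
    have hTk := EZ.flip_SES_ker hTs
    let f : L →ₗ[R] LinearMap.ker T := LinearMap.codRestrict _ (LinearMap.inl R _ _ ∘ₗ a)
      (fun x => by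
        rw [LinearMap.mem_ker, LinearMap.comp_apply, LinearMap.inl_apply, hT, hba]; simp)
    let g : LinearMap.ker T →ₗ[R] LinearMap.ker π := LinearMap.codRestrict _
      (LinearMap.snd R _ _ ∘ₗ (LinearMap.ker T).subtype) (fun x => by
        have := x.2
        rw [LinearMap.mem_ker] at this ⊢
        have h2 := hT x.1.1 x.1.2
        rw [Prod.mk.eta, this] at h2
        have h3 := congrArg e h2
        rw [map_zero, map_add, hec, zero_add, heψ] at h3
        exact h3.symm)
    refine ⟨ModuleCat.of R (LinearMap.ker T), ModuleCat.of R (LinearMap.ker π), f, g, ?_,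
      ⟨?_, ?_, ?_⟩, ?_⟩
    · intro Y _ _ j hj
      obtain ⟨j, rfl⟩ := Nat.exists_eq_add_of_lt hj
      exact hTk.con1 (EZ.proj _) (hV1 Y _ (by omega))
    · intro x y hxy
      exact hs.inj (congrArg Prod.fst (congrArg Subtype.val hxy))
    · intro q
      have hq : π q.1 = 0 := q.2
      obtain ⟨x, hx⟩ := (hs1.ex (- ψ q.1)).1 (by rw [map_neg, heψ, hq, neg_zero])
      obtain ⟨p, rfl⟩ := hs.surj x
      exact ⟨⟨(p, q.1), by rw [LinearMap.mem_ker, hT, hx, neg_add_cancel]⟩, rfl⟩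
    · rintro ⟨⟨p, q⟩, hpq⟩
      constructor
      · intro h
        have hq : q = 0 := congrArg Subtype.val h
        subst hq
        rw [LinearMap.mem_ker, hT, map_zero, add_zero] at hpq
        obtain ⟨x, hx⟩ := (hs.ex p).1 (hs1.inj (by rw [hpq, map_zero]))
        refine ⟨x, Subtype.ext (Prod.ext hx rfl)⟩
      · rintro ⟨x, hx⟩
        have : (0 : L1' →₀ R) = q := congrArg Prod.snd (congrArg Subtype.val hx)
        subst this
        rfl
    · exact ⟨ModuleCat.of R (L1' →₀ R), L1', (LinearMap.ker π).subtype, π,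
        inferInstanceAs (Module.Projective R (L1' →₀ R)), EZ.flip_SES_ker hπ, hL1'⟩

theorem embed_all {N : ℕ}
    (hN : ∀ (I : Type u) [AddCommGroup I] [Module R I], Module.Injective R I → PD R I N)
    (hid : ∀ (F : Type u) [AddCommGroup F] [Module R F] [Module.Flat R F]
      (G : Type u) [AddCommGroup G] [Module R G] (j : ℕ), N < j → EZ R G F j) :
    ∀ (d k : ℕ), k + d = N → ∀ (M : ModuleCat.{u} R), IsSyz R k M →
      ∃ (V G : ModuleCat.{u} R) (f : M →ₗ[R] V) (g : V →ₗ[R] G),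
        (∃ e, PD R V e) ∧ SES f g ∧ IsSyz R N G := by
  intro d
  induction d with
  | zero =>
    intro k hk M hM
    obtain rfl : k = N := by omega
    obtain ⟨V, L', f, g, hV, hs, hL⟩ := syz_embed hN k 0 rfl M hM
    exact ⟨V, L', f, g, ⟨_, hV⟩, hs, hL⟩
  | succ d ih =>
    intro k hk M hM
    obtain ⟨σ, hσ⟩ := free_cover (R := R) M
    have hsσ := EZ.flip_SES_ker hσ
    obtain ⟨V, G, κ, π, ⟨e, hV⟩, hs, hG⟩ := ih (k + 1) (by omega)
      (ModuleCat.of R (LinearMap.ker σ)) ⟨ModuleCat.of R (M →₀ R), M, (LinearMap.ker σ).subtype, σ,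
        inferInstanceAs (Module.Projective R (M →₀ R)), hsσ, hM⟩
    obtain ⟨Q, G', a, c, hQ, hs', hG'⟩ := syz_embed hN N 0 (by omega) G hG
    have hQp : Module.Projective R Q := projective_of_EZ fun Y _ _ => hQ Y 1 one_pos
    have hGP : EZ R G (M →₀ R) 1 := syz_EZ (N := N) _ (hid _) N G hG 0 (by omega)
    obtain ⟨r, hr⟩ := hs.extend hGP (LinearMap.ker σ).subtype
    have hrκ : ∀ x : LinearMap.ker σ, r (κ x) = x.1 := fun x => LinearMap.congr_fun hr x
    have hπκ : ∀ x, π (κ x) = 0 := fun x => (hs.ex _).2 ⟨x, rfl⟩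
    have hca : ∀ x, c (a x) = 0 := fun x => (hs'.ex _).2 ⟨x, rfl⟩
    let T : V →ₗ[R] ((M →₀ R) × Q) := r.prod (a ∘ₗ π)
    have hTi : Function.Injective T := by
      rw [injective_iff_map_eq_zero]
      intro v hv
      have h1 : r v = 0 := congrArg Prod.fst hv
      have h2 : a (π v) = 0 := congrArg Prod.snd hv
      obtain ⟨x, rfl⟩ := (hs.ex v).1 (hs'.inj (by rw [h2, map_zero]))
      have : x = 0 := Subtype.ext (by rw [← hrκ, h1]; rfl)
      rw [this, map_zero]
    have hsT := SES.ofQuot hTi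
    let W := ((M →₀ R) × Q) ⧸ LinearMap.range T
    obtain ⟨f, hf⟩ := desc_exists σ hσ
      ((LinearMap.range T).mkQ ∘ₗ LinearMap.inl R (M →₀ R) Q) (by
        intro p hp
        refine (hsT.ex _).2 ⟨κ ⟨p, hp⟩, Prod.ext (hrκ ⟨p, hp⟩) ?_⟩
        change a (π (κ _)) = 0
        rw [hπκ, map_zero])
    obtain ⟨g, hg⟩ := desc_exists (LinearMap.range T).mkQ (Submodule.mkQ_surjective _)
      (c ∘ₗ LinearMap.snd R (M →₀ R) Q) (by
        intro p hp
        obtain ⟨v, rfl⟩ := (hsT.ex _).1 hp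
        exact hca _)
    refine ⟨ModuleCat.of R W, G', f, g, ⟨e + 1, ?_⟩, ⟨?_, ?_, ?_⟩, hG'⟩
    · intro Y _ _ j hj
      obtain ⟨j, rfl⟩ := Nat.exists_eq_add_of_lt hj
      exact hsT.con3 (hV Y _ (by omega)) (EZ.proj _)
    · rw [injective_iff_map_eq_zero]
      intro x hx
      obtain ⟨p, rfl⟩ := hσ x
      rw [hf] at hx
      obtain ⟨v, hv⟩ := (hsT.ex _).1 hx
      have h1 : r v = p := congrArg Prod.fst hv
      have h2 : a (π v) = 0 := congrArg Prod.snd hv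
      obtain ⟨y, rfl⟩ := (hs.ex v).1 (hs'.inj (by rw [h2, map_zero]))
      rw [← h1, hrκ]
      exact y.2
    · intro y
      obtain ⟨q, rfl⟩ := hs'.surj y
      exact ⟨(LinearMap.range T).mkQ (0, q), hg _⟩
    · intro w
      obtain ⟨⟨p, q⟩, rfl⟩ := Submodule.mkQ_surjective _ w
      rw [hg]
      constructor
      · intro h
        obtain ⟨y, hy⟩ := (hs'.ex q).1 h
        obtain ⟨v, rfl⟩ := hs.surj y
        refine ⟨σ (p - r v), ?_⟩
        rw [hf, ← sub_eq_zero, LinearMap.comp_apply, ← map_sub]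
        refine (hsT.ex _).2 ⟨-v, Prod.ext ?_ ?_⟩
        · simp [T]
        · simp [T, hy]
      · rintro ⟨x, hx⟩
        obtain ⟨p', rfl⟩ := hσ x
        rw [hf] at hx
        have := congrArg g hx
        rw [hg, LinearMap.comp_apply, hg] at this
        rw [← this]
        exact map_zero c

end partc

theorem stmt2 (R : Type u) [CommRing R] (n m : ℕ)
    (hcoh : IsCoherentRing R)
    (hFC : ∀ (P : ModuleCat.{u} R), Module.FinitePresentation R P →
      ExtVanish R P (ModuleCat.of R R) (n + 1))
    (hperf : ∀ (F : ModuleCat.{u} R), Module.Flat R F → ProjDimLE R F m)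
    (M : ModuleCat.{u} R)
    (hM : ∀ (Q : ModuleCat.{u} R), HasFinProjDim R Q →
      ∀ i : ℕ, 1 ≤ i → ExtVanish R M Q i) :
    ∃ (P0 G0 : ModuleCat.{u} R) (f : M →ₗ[R] P0) (g : P0 →ₗ[R] G0),
      Module.Projective R P0 ∧
      Function.Injective f ∧ Function.Surjective g ∧ Function.Exact f g ∧
      ∀ (Q : ModuleCat.{u} R), HasFinProjDim R Q →
        ∀ i : ℕ, 1 ≤ i → ExtVanish R G0 Q i := by
  have hperf' : ∀ (F : Type u) [AddCommGroup F] [Module R F] [Module.Flat R F], PD R F m := by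
    intro F _ _ hF Y _ _ j hj
    obtain ⟨j, rfl⟩ := Nat.exists_eq_add_of_lt hj
    exact (extVanish_iff_s2 R (ModuleCat.of R F) (ModuleCat.of R Y) _).1
      (hperf (ModuleCat.of R F) hF (ModuleCat.of R Y) _ hj)
  have hI : ∀ (I : Type u) [AddCommGroup I] [Module R I], Module.Injective R I →
      PD R I (n + m) ∧ ∀ (G : Type u) [AddCommGroup G] [Module R G] (j : ℕ), n < j →
        EZ R G (CharacterModule I) j := by
    intro I _ _ hI
    have := flat_dual_of_injective hcoh I hI
    refine fd_bound hperf' n I fun P _ _ hP => EZ_fp_flat hcoh _ n P ?_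
    exact (extVanish_iff_s2 R (ModuleCat.of R P) (ModuleCat.of R R) n).1 (hFC _ hP)
  have hid : ∀ (F : Type u) [AddCommGroup F] [Module R F] [Module.Flat R F]
      (G : Type u) [AddCommGroup G] [Module R G] (j : ℕ), n + m < j → EZ R G F j := by
    intro F _ _ _
    exact id_flat hcoh (fun I _ _ h => (hI I h).2) m F (fun X _ _ _ j hj => hperf' X F j hj)
  obtain ⟨V, G, f, g, ⟨e, hV⟩, hs, hG⟩ := embed_all (fun I _ _ h => (hI I h).1) hid (n + m) 0
    (zero_add _) M trivial
  have hfin : ∀ Q : ModuleCat.{u} R, HasFinProjDim R Q → ∃ d, PD R Q d := by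
    rintro Q ⟨d, hd⟩
    refine ⟨d, fun Y _ _ j hj => ?_⟩
    obtain ⟨j, rfl⟩ := Nat.exists_eq_add_of_lt hj
    exact (extVanish_iff_s2 R Q (ModuleCat.of R Y) _).1 (hd _ _ hj)
  have hGood : ∀ (Q : Type u) [AddCommGroup Q] [Module R Q] (d : ℕ), PD R Q d → ∀ i : ℕ,
      EZ R G Q (i + 1) := by
    intro Q _ _ d hd i
    exact syz_EZ (N := n + m) Q (id_finpd hid d Q hd) (n + m) G hG i (by omega)
  have hVp : Module.Projective R V := by
    obtain ⟨p, hp⟩ := free_cover (R := R) V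
    have hk := EZ.flip_SES_ker hp
    have hK : PD R (LinearMap.ker p) e := by
      intro Y _ _ j hj
      obtain ⟨j, rfl⟩ := Nat.exists_eq_add_of_lt hj
      exact hk.con1 (EZ.proj _) (hV Y _ (by omega))
    have hMK : EZ R M (LinearMap.ker p) 1 := by
      refine (extVanish_iff_s2 R M (ModuleCat.of R (LinearMap.ker p)) 0).1 (hM _ ⟨e, ?_⟩ 1 le_rfl)
      intro Y j hj
      obtain ⟨j, rfl⟩ := Nat.exists_eq_add_of_lt hj
      exact (extVanish_iff_s2 R (ModuleCat.of R (LinearMap.ker p)) Y _).2 (hK Y _ hj)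
    obtain ⟨s, hs⟩ := hk.lift (hs.con2 hMK (hGood _ e hK 0)) LinearMap.id
    exact Module.Projective.of_split s p hs
  refine ⟨V, G, f, g, hVp, hs.inj, hs.surj, hs.ex, fun Q hQ i hi => ?_⟩
  obtain ⟨d, hd⟩ := hfin Q hQ
  obtain ⟨i, rfl⟩ := Nat.exists_eq_add_of_le' hi
  exact (extVanish_iff_s2 R G Q i).2 (hGood Q d hd i)

end
end

section
/- Let R be a nontrivial commutative ring and let T = R ⋉ R be the trivial extension of R by itself. Then T has infinite global dimension: for every nonnegative integer n there exists a T-module whose projective dimension over T exceeds n. -/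
open CategoryTheory

noncomputable section

universe u

section Helper

variable (S : Type u) [CommRing S] (e : S)

/-- Multiplication by `e` on the free module `S`. -/
def mulMap : ModuleCat.of S S ⟶ ModuleCat.of S S := ModuleCat.ofHom (LinearMap.mulLeft S e)

/-- The quotient `S / (e)`. -/
def quotObj : ModuleCat.{u} S := ModuleCat.of S (S ⧸ Ideal.span {e})

/-- The projection to the quotient. -/
def quotMap : ModuleCat.of S S ⟶ quotObj S e :=
  ModuleCat.ofHom (Submodule.mkQ (Ideal.span {e}))

lemma mulMap_apply (x : S) : (mulMap S e).hom x = e * x := rfl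

lemma mulMap_comp (he : e * e = 0) : mulMap S e ≫ mulMap S e = 0 := by
  ext
  change e * (e * 1) = 0
  rw [mul_one, he]

lemma mulMap_comp_hom (f : ModuleCat.of S S ⟶ quotObj S e) : mulMap S e ≫ f = 0 := by
  apply ModuleCat.hom_ext
  apply LinearMap.ext
  intro x
  have h1 : (mulMap S e ≫ f).hom x = f.hom (e • x) := rfl
  rw [h1, map_smul]
  obtain ⟨y, hy⟩ := Submodule.mkQ_surjective (Ideal.span {e}) (f.hom x)
  have h2 : e • f.hom x = Submodule.mkQ (Ideal.span {e}) (e • y) := by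
    rw [map_smul, hy]; rfl
  rw [h2]
  exact (Submodule.Quotient.mk_eq_zero _).2
    (Ideal.mul_mem_right _ _ (Ideal.mem_span_singleton_self e))

/-- The complex with all differentials multiplication by `e`. -/
def perComplex (he : e * e = 0) : ChainComplex (ModuleCat.{u} S) ℕ :=
  ChainComplex.of (fun _ => ModuleCat.of S S) (fun _ => mulMap S e)
    (fun _ => mulMap_comp S e he)

lemma perComplex_d (he : e * e = 0) (n : ℕ) : (perComplex S e he).d (n + 1) n = mulMap S e :=
  ChainComplex.of_d (V := ModuleCat.{u} S) (fun _ => ModuleCat.of S S) (fun _ => mulMap S e) n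

/-- The augmentation. -/
def perπ (he : e * e = 0) :
    perComplex S e he ⟶ (ChainComplex.single₀ (ModuleCat.{u} S)).obj (quotObj S e) :=
  ((perComplex S e he).toSingle₀Equiv (quotObj S e)).symm
    ⟨quotMap S e, by rw [perComplex_d]; exact mulMap_comp_hom S e _⟩

lemma perπ_quasiIso (he : e * e = 0) (hk : ∀ x, e * x = 0 → ∃ y, e * y = x) :
    QuasiIso (perπ S e he) where
  quasiIsoAt m := by
    cases m with
    | zero =>
      rw [ChainComplex.quasiIsoAt₀_iff, ShortComplex.quasiIso_iff_of_zeros' _ rfl rfl rfl]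
      constructor
      · rw [ShortComplex.moduleCat_exact_iff]
        intro x hx
        have hx' : Submodule.mkQ (Ideal.span {e}) x = 0 := by
          have h3 : (perπ S e he).f 0 = quotMap S e :=
            ChainComplex.toSingle₀Equiv_symm_apply_f_zero _ _
          change (ConcreteCategory.hom ((perπ S e he).f 0)) x = 0 at hx
          rw [h3] at hx
          exact hx
        have hx2 := (Submodule.Quotient.mk_eq_zero _).1 hx'
        obtain ⟨y, hy⟩ := Ideal.mem_span_singleton'.1 hx2
        refine ⟨y, ?_⟩
        change (ConcreteCategory.hom ((perComplex S e he).d 1 0)) y = x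
        rw [perComplex_d]
        exact (mul_comm e y).trans hy
      · rw [ModuleCat.epi_iff_surjective]
        have h3 : (perπ S e he).f 0 = quotMap S e :=
          ChainComplex.toSingle₀Equiv_symm_apply_f_zero _ _
        change Function.Surjective (ConcreteCategory.hom ((perπ S e he).f 0))
        rw [h3]
        exact Submodule.mkQ_surjective _
    | succ m =>
      rw [quasiIsoAt_iff_exactAt' (hL := ChainComplex.exactAt_succ_single_obj ..),
          HomologicalComplex.exactAt_iff' _ (m + 2) (m + 1) m (by simp) (by simp),
          ShortComplex.moduleCat_exact_iff]
      intro x hx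
      change (ConcreteCategory.hom ((perComplex S e he).d (m + 1) m)) x = 0 at hx
      rw [perComplex_d] at hx
      obtain ⟨y, hy⟩ := hk x hx
      refine ⟨y, ?_⟩
      change (ConcreteCategory.hom ((perComplex S e he).d (m + 2) (m + 1))) y = x
      rw [perComplex_d]
      exact hy

/-- The periodic resolution. -/
def perRes (he : e * e = 0) (hk : ∀ x, e * x = 0 → ∃ y, e * y = x) :
    ProjectiveResolution (quotObj S e) where
  complex := perComplex S e he
  projective _ := inferInstanceAs (Projective (ModuleCat.of S S))
  π := perπ S e he
  quasiIso := perπ_quasiIso S e he hk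

lemma ext_ne (he : e * e = 0) (hk : ∀ x, e * x = 0 → ∃ y, e * y = x)
    (h1 : (1 : S) ∉ Ideal.span {e}) (n : ℕ) :
    ¬ ExtVanish S (quotObj S e) (quotObj S e) (n + 1) := by
  intro h
  have hz : Limits.IsZero (extGroup S (quotObj S e) (quotObj S e) (n + 1)) :=
    @ModuleCat.isZero_of_subsingleton _ _ _ h
  have hz2 := hz.of_iso ((perRes S e he hk).isoExt (R := S) (n + 1) (quotObj S e)).symm
  rw [← HomologicalComplex.exactAt_iff_isZero_homology,
    HomologicalComplex.exactAt_iff' _ n (n + 1) (n + 2) (by simp) (by simp),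
    ShortComplex.moduleCat_exact_iff] at hz2
  obtain ⟨x, hx⟩ := hz2 (quotMap S e) (by
    change (perComplex S e he).d (n + 2) (n + 1) ≫ quotMap S e = 0
    rw [perComplex_d]
    exact mulMap_comp_hom S e _)
  have hx' : (perComplex S e he).d (n + 1) n ≫ x = quotMap S e := hx
  rw [perComplex_d] at hx'
  have h0 : quotMap S e = 0 := hx'.symm.trans (mulMap_comp_hom S e x)
  apply h1
  have : (quotMap S e).hom (1 : S) = 0 := by rw [h0]; rfl
  exact (Submodule.Quotient.mk_eq_zero _).1 this

end Helper

theorem stmt6 (R : Type u) [CommRing R] [Nontrivial R] (n : ℕ) :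
    ∃ (M : ModuleCat.{u} (TrivSqZeroExt R R)), ¬ ProjDimLE (TrivSqZeroExt R R) M n := by
  have key : ∀ x : TrivSqZeroExt R R, TrivSqZeroExt.inr (1 : R) * x =
      TrivSqZeroExt.inr x.fst := by
    intro x
    ext <;> simp
  refine ⟨quotObj (TrivSqZeroExt R R) (TrivSqZeroExt.inr 1), fun h => ?_⟩
  refine ext_ne (TrivSqZeroExt R R) (TrivSqZeroExt.inr 1) ?_ ?_ ?_ n (h _ _ n.lt_succ_self)
  · simp
  · intro x hx
    rw [key] at hx
    have h0 : x.fst = 0 := by simpa using congrArg TrivSqZeroExt.snd hx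
    refine ⟨TrivSqZeroExt.inl x.snd, ?_⟩
    rw [key]
    ext <;> simp [h0]
  · intro h1
    obtain ⟨y, hy⟩ := Ideal.mem_span_singleton'.1 h1
    rw [mul_comm, key] at hy
    simpa using congrArg TrivSqZeroExt.fst hy

end
end

section
/- Let R be a commutative ring and let T = R ⋉ R be the trivial extension of R by itself. Then the self-injective dimension of T equals the self-injective dimension of R: for every nonnegative integer n, one has Ext_T^j(N, T) = 0 for every T-module N and every j > n if and only if Ext_R^j(N', R) = 0 for every R-module N' and every j > n. -/
open CategoryTheory

noncomputable section

universe u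

lemma extVanish_succ_iff (R : Type u) [CommRing R] (M N : ModuleCat.{u} R)
    (P : ProjectiveResolution M) (k : ℕ) :
    ExtVanish R M N (k + 1) ↔ ∀ f : P.complex.X (k + 1) ⟶ N,
      P.complex.d (k + 2) (k + 1) ≫ f = 0 →
        ∃ g : P.complex.X k ⟶ N, P.complex.d (k + 1) k ≫ g = f := by
  unfold ExtVanish extGroup
  rw [← ModuleCat.isZero_iff_subsingleton, (P.isoExt (R := R) (k + 1) N).isZero_iff,
    ← HomologicalComplex.exactAt_iff_isZero_homology,
    HomologicalComplex.exactAt_iff' _ k (k + 1) (k + 2) (by simp) (by simp),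
    ShortComplex.moduleCat_exact_iff]
  rfl

def sndHom (R : Type u) [CommRing R] (P : ModuleCat.{u} (TrivSqZeroExt R R))
    (f : P ⟶ ModuleCat.of (TrivSqZeroExt R R) (TrivSqZeroExt R R)) :
    (ModuleCat.restrictScalars (TrivSqZeroExt.inlHom R R)).obj P ⟶ ModuleCat.of R R :=
  ModuleCat.ofHom (X := (ModuleCat.restrictScalars (TrivSqZeroExt.inlHom R R)).obj P)
    { toFun := fun p => (f.hom (show P from p)).snd
      map_add' := fun x y => by
        rw [← TrivSqZeroExt.snd_add]
        exact congrArg _ (map_add f.hom (show P from x) (show P from y))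
      map_smul' := fun r x => by
        have := congrArg TrivSqZeroExt.snd
          (map_smul f.hom (TrivSqZeroExt.inlHom R R r) (show P from x))
        refine this.trans ?_
        simp }

def liftHom (R : Type u) [CommRing R] (P : ModuleCat.{u} (TrivSqZeroExt R R))
    (g : (ModuleCat.restrictScalars (TrivSqZeroExt.inlHom R R)).obj P ⟶ ModuleCat.of R R) :
    P ⟶ ModuleCat.of (TrivSqZeroExt R R) (TrivSqZeroExt R R) :=
  ModuleCat.ofHom
    { toFun := fun p => ((g.hom ((TrivSqZeroExt.inr 1 : TrivSqZeroExt R R) • p : P),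
        g.hom p) : R × R)
      map_add' := fun x y => by
        rw [smul_add]
        exact Prod.ext (map_add g.hom _ _) (map_add g.hom _ _)
      map_smul' := fun t x => by
        have key : ∀ (r : R) (x : P), g.hom ((TrivSqZeroExt.inl r : TrivSqZeroExt R R) • x : P)
            = r * g.hom x := fun r x =>
              map_smul g.hom r (show (ModuleCat.restrictScalars (TrivSqZeroExt.inlHom R R)).obj P from x)
        have hadd : ∀ x y : P, g.hom (x + y : P) = g.hom x + g.hom y :=
          fun x y => map_add g.hom x y
        have ht : t = TrivSqZeroExt.inl t.fst + TrivSqZeroExt.inl t.snd * TrivSqZeroExt.inr 1 := by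
          ext <;> simp
        have h1 : (TrivSqZeroExt.inr 1 : TrivSqZeroExt R R) • t • x
            = (TrivSqZeroExt.inl t.fst : TrivSqZeroExt R R) •
              (TrivSqZeroExt.inr 1 : TrivSqZeroExt R R) • x := by
          rw [smul_smul, smul_smul]
          congr 1
          ext <;> simp
        have h2 : t • x = (TrivSqZeroExt.inl t.fst : TrivSqZeroExt R R) • x +
            (TrivSqZeroExt.inl t.snd : TrivSqZeroExt R R) •
              (TrivSqZeroExt.inr 1 : TrivSqZeroExt R R) • x := by
          rw [smul_smul, ← add_smul, ← ht]
        apply TrivSqZeroExt.ext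
        · change g.hom _ = t.fst * g.hom _
          rw [h1, key]
        · change g.hom _ = t.fst * g.hom _ + t.snd * g.hom _
          rw [h2, hadd, key, key] }

lemma snd_lift (R : Type u) [CommRing R] (P : ModuleCat.{u} (TrivSqZeroExt R R)) (g) :
    sndHom R P (liftHom R P g) = g := rfl

lemma lift_snd (R : Type u) [CommRing R] (P : ModuleCat.{u} (TrivSqZeroExt R R)) (f) :
    liftHom R P (sndHom R P f) = f := by
  refine ModuleCat.hom_ext (LinearMap.ext fun p => ?_)
  refine TrivSqZeroExt.ext ?_ rfl
  change (f.hom ((TrivSqZeroExt.inr 1 : TrivSqZeroExt R R) • p)).snd = (f.hom p).fst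
  rw [map_smul]
  simp

lemma snd_comp (R : Type u) [CommRing R] (P Q : ModuleCat.{u} (TrivSqZeroExt R R))
    (d : P ⟶ Q) (f) : sndHom R P (d ≫ f) =
      (ModuleCat.restrictScalars (TrivSqZeroExt.inlHom R R)).map d ≫ sndHom R Q f := rfl

lemma snd_inj (R : Type u) [CommRing R] (P : ModuleCat.{u} (TrivSqZeroExt R R)) :
    Function.Injective (sndHom R P) :=
  Function.LeftInverse.injective (lift_snd R P)

instance presProj (R : Type u) [CommRing R] :
    (ModuleCat.restrictScalars.{u} (TrivSqZeroExt.inlHom R R)).PreservesProjectiveObjects where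
  projective_obj {P} hP := by
    have h : Module.Projective (TrivSqZeroExt R R) P := by
      rwa [← IsProjective.iff_projective] at hP
    rw [← IsProjective.iff_projective]
    let _ : Module R P := Module.compHom P (TrivSqZeroExt.inlHom R R)
    have : IsScalarTower R (TrivSqZeroExt R R) P := by
      refine ⟨fun r t x => ?_⟩
      change _ = (TrivSqZeroExt.inl r : TrivSqZeroExt R R) • t • x
      rw [smul_smul, TrivSqZeroExt.inl_mul_eq_smul]
    have : Module.Free R (TrivSqZeroExt R R) :=
      inferInstanceAs (Module.Free R (R × R))
    obtain ⟨s, hs⟩ := Module.projective_def'.1 h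
    have : Module.Projective R P := Module.Projective.of_split (s.restrictScalars R)
      ((Finsupp.linearCombination (TrivSqZeroExt R R) (id : P → P)).restrictScalars R)
      (LinearMap.ext fun x => LinearMap.congr_fun hs x)
    exact this

lemma ext_iff (R : Type u) [CommRing R] (N : ModuleCat.{u} (TrivSqZeroExt R R)) (k : ℕ) :
    ExtVanish (TrivSqZeroExt R R) N
        (ModuleCat.of (TrivSqZeroExt R R) (TrivSqZeroExt R R)) (k + 1) ↔
    ExtVanish R ((ModuleCat.restrictScalars (TrivSqZeroExt.inlHom R R)).obj N)
      (ModuleCat.of R R) (k + 1) := by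
  let P := projectiveResolution N
  rw [extVanish_succ_iff _ _ _ P, extVanish_succ_iff _ _ _
    ((ModuleCat.restrictScalars (TrivSqZeroExt.inlHom R R)).mapProjectiveResolution P)]
  constructor
  · intro h f hf
    obtain ⟨g, hg⟩ := h (liftHom R _ f) (snd_inj R _ hf)
    exact ⟨sndHom R _ g, (snd_comp R _ _ _ g).symm.trans
      ((congrArg (sndHom R _) hg).trans (snd_lift R _ f))⟩
  · intro h f hf
    obtain ⟨g, hg⟩ := h (sndHom R _ f) (congrArg (sndHom R _) hf)
    exact ⟨liftHom R _ g, snd_inj R _ hg⟩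

theorem stmt7 (R : Type u) [CommRing R] (n : ℕ) :
    (∀ (N : ModuleCat.{u} (TrivSqZeroExt R R)) (j : ℕ), n < j →
      ExtVanish (TrivSqZeroExt R R) N
        (ModuleCat.of (TrivSqZeroExt R R) (TrivSqZeroExt R R)) j) ↔
    (∀ (N' : ModuleCat.{u} R) (j : ℕ), n < j →
      ExtVanish R N' (ModuleCat.of R R) j) := by
  constructor
  · intro h N j hj
    obtain ⟨k, rfl⟩ : ∃ k, j = k + 1 := ⟨j - 1, by omega⟩
    have := (ext_iff R ((ModuleCat.restrictScalars
      (TrivSqZeroExt.fstHom R R R).toRingHom).obj N) k).1 (h _ _ hj)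
    exact this
  · intro h N j hj
    obtain ⟨k, rfl⟩ : ∃ k, j = k + 1 := ⟨j - 1, by omega⟩
    exact (ext_iff R N k).2 (h _ _ hj)

end
end

section
/- Let R be a commutative ring, G an abelian group, and RG the group ring of G over R. If every flat RG-module has projective dimension at most n over RG, then every flat R-module has projective dimension at most n over R. (That is, cot.D(R) ≤ cot.D(RG).) -/
open CategoryTheory

noncomputable section

universe u

lemma extVanish_iff_s8 (R : Type u) [CommRing R] (M N : ModuleCat.{u} R) (P : ProjectiveResolution M)
    (j : ℕ) : ExtVanish R M N (j + 1) ↔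
    ∀ f : P.complex.X (j + 1) ⟶ N, P.complex.d (j + 2) (j + 1) ≫ f = 0 →
      ∃ g : P.complex.X j ⟶ N, P.complex.d (j + 1) j ≫ g = f := by
  unfold ExtVanish extGroup
  rw [(P.isoExt (R := R) (j + 1) N).toLinearEquiv.toEquiv.subsingleton_congr,
    ← ModuleCat.isZero_iff_subsingleton,
    ← HomologicalComplex.exactAt_iff_isZero_homology,
    HomologicalComplex.exactAt_iff' _ j (j + 1) (j + 2) (by simp) (by simp),
    ShortComplex.moduleCat_exact_iff]
  rfl

lemma stmt8_flat (R S : Type u) [CommRing R] [CommRing S] (φ : R →+* S)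
    (M : ModuleCat.{u} R) (hM : Module.Flat R M) :
    Module.Flat S ((ModuleCat.extendScalars φ).obj M) := by
  algebraize [φ]
  exact inferInstanceAs (Module.Flat S (TensorProduct R S M))

lemma stmt8_ext (R S : Type u) [CommRing R] [CommRing S] (φ : R →+* S) (hφ : φ.Flat)
    (ε : S →+* R) (hε : ε.comp φ = RingHom.id R)
    (M N : ModuleCat.{u} R) (j : ℕ)
    (h : ExtVanish S ((ModuleCat.extendScalars φ).obj M)
      ((ModuleCat.restrictScalars ε).obj N) (j + 1)) :
    ExtVanish R M N (j + 1) := by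
  have := ModuleCat.preservesFiniteLimits_extendScalars_of_flat hφ
  let adj := ModuleCat.extendRestrictScalarsAdj.{u} φ
  have := adj.isLeftAdjoint
  have : (ModuleCat.extendScalars.{u, u, u} φ).Additive := adj.left_adjoint_additive
  have : (ModuleCat.extendScalars.{u, u, u} φ).PreservesProjectiveObjects :=
    Functor.preservesProjectiveObjects_of_adjunction_of_preservesEpimorphisms adj
  let P := projectiveResolution M
  let e : (ModuleCat.restrictScalars φ).obj ((ModuleCat.restrictScalars ε).obj N) ≅ N :=
    (ModuleCat.restrictScalarsComp'App φ ε _ rfl N).symm ≪≫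
      ModuleCat.restrictScalarsId'App _ hε N
  rw [extVanish_iff_s8 _ _ _ ((ModuleCat.extendScalars φ).mapProjectiveResolution P)] at h
  replace h : ∀ f : (ModuleCat.extendScalars φ).obj (P.complex.X (j + 1)) ⟶
        (ModuleCat.restrictScalars ε).obj N,
      (ModuleCat.extendScalars φ).map (P.complex.d (j + 2) (j + 1)) ≫ f = 0 →
      ∃ g : (ModuleCat.extendScalars φ).obj (P.complex.X j) ⟶
        (ModuleCat.restrictScalars ε).obj N,
      (ModuleCat.extendScalars φ).map (P.complex.d (j + 1) j) ≫ g = f := h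
  rw [extVanish_iff_s8 _ _ _ P]
  intro f hf
  obtain ⟨g, hg⟩ := h ((adj.homEquiv _ _).symm (f ≫ e.inv)) (by
    rw [← adj.homEquiv_naturality_left_symm, reassoc_of% hf, Limits.zero_comp]
    simp [Adjunction.homEquiv_counit])
  refine ⟨adj.homEquiv _ _ g ≫ e.hom, ?_⟩
  rw [← Category.assoc, ← adj.homEquiv_naturality_left, hg, Equiv.apply_symm_apply]
  simp

theorem stmt8 (R : Type u) [CommRing R] (G : Type u) [CommGroup G] (n : ℕ)
    (h : ∀ (F : ModuleCat.{u} (MonoidAlgebra R G)), Module.Flat (MonoidAlgebra R G) F →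
      ProjDimLE (MonoidAlgebra R G) F n) :
    ∀ (F : ModuleCat.{u} R), Module.Flat R F → ProjDimLE R F n := by
  intro F hF N j hj
  obtain ⟨j, rfl⟩ : ∃ k, j = k + 1 := ⟨j - 1, by omega⟩
  refine stmt8_ext R (MonoidAlgebra R G) (algebraMap R (MonoidAlgebra R G)) ?_
    (MonoidAlgebra.lift R R G 1).toRingHom ?_ F N j (h _ ?_ _ _ hj)
  · rw [RingHom.flat_algebraMap_iff]
    infer_instance
  · exact (MonoidAlgebra.lift R R G 1).comp_algebraMap
  · exact stmt8_flat _ _ _ F hF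

end
end
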